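/- arXiv:math/0109035 — 3 statements merged into one kernel-verified Lean document; each statement's English description precedes it below -/
import Mathlib

section
/- Let S = k[x_0,...,x_n] be a polynomial ring over a field, and let X be an arrangement of d linear subspaces of projective n-space with defining ideals I_1,...,I_d (each generated by linear forms). Then the ideal I(X) = I_1 ∩ ... ∩ I_d is d-regular in the sense of Castelnuovo–Mumford, i.e., reg(I_1 ∩ ... ∩ I_d) ≤ d. -/
open MvPolynomial
attribute [local instance] MvPolynomial.gradedAlgebra

/-- The polynomial ring `S = k[x_0, …, x_n]`. -/
noncomputable abbrev MvP (k : Type*) [Field k] (n : ℕ) : Type _ := MvPolynomial (Fin (n+1)) k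

/-- An ideal generated by linear forms. -/
def IsLinearIdeal {k : Type*} [Field k] {n : ℕ} (I : Ideal (MvP k n)) : Prop :=
  ∃ T : Set (MvP k n), T ⊆ (homogeneousSubmodule (Fin (n+1)) k 1 : Submodule k (MvP k n)) ∧
    I = Ideal.span T

/-- `I` is `r`-regular (Castelnuovo–Mumford): there is a graded free resolution
`⋯ → ⊕_α S(-e_{α,i}) → ⋯ → ⊕_α S(-e_{α,0}) → I → 0` with all `e_{α,i} ≤ r + i`.
The `i`-th free module is `Fin (ρ i) → S` with generator degrees `e i`; gradedness of the
maps is expressed by homogeneity of the matrix entries (images of the standard basis). -/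
def IdealIsRegular {k : Type*} [Field k] {n : ℕ} (I : Ideal (MvP k n)) (r : ℤ) : Prop :=
  ∃ (ρ : ℕ → ℕ) (e : ∀ i, Fin (ρ i) → ℕ)
    (δ : ∀ i, (Fin (ρ (i+1)) → MvP k n) →ₗ[MvP k n] (Fin (ρ i) → MvP k n))
    (ε : (Fin (ρ 0) → MvP k n) →ₗ[MvP k n] MvP k n),
    LinearMap.range ε = I ∧
    LinearMap.ker ε = LinearMap.range (δ 0) ∧
    (∀ i, LinearMap.ker (δ i) = LinearMap.range (δ (i+1))) ∧
    (∀ β, ε (Pi.single β 1) ∈ homogeneousSubmodule (Fin (n+1)) k (e 0 β)) ∧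
    (∀ i (β : Fin (ρ (i+1))) (α : Fin (ρ i)), δ i (Pi.single β 1) α = 0 ∨
      (e i α ≤ e (i+1) β ∧
        δ i (Pi.single β 1) α ∈ homogeneousSubmodule (Fin (n+1)) k (e (i+1) β - e i α))) ∧
    (∀ i (β : Fin (ρ i)), (e i β : ℤ) ≤ r + i)


abbrev Lam (k : Type*) [Field k] (n : ℕ) : Type _ :=
  ExteriorAlgebra k (Module.Dual k (Fin (n+1) → k))

section Koszul
variable {k : Type*} [Field k] {n : ℕ}

noncomputable def lin (c : Fin (n+1) → k) : MvP k n := ∑ i, c i • (X i : MvP k n)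

noncomputable def iv (v : Module.Dual k (Fin (n+1) → k)) : Lam k n := ExteriorAlgebra.ι k v

noncomputable def ct (c : Fin (n+1) → k) : Lam k n →ₗ[k] Lam k n :=
  CliffordAlgebra.contractLeft (Q := 0) (Module.Dual.eval k (Fin (n+1) → k) c)

theorem ct_iv_mul (c : Fin (n+1) → k) (v : Module.Dual k (Fin (n+1) → k)) (x : Lam k n) :
    ct c (iv v * x) = v c • x - iv v * ct c x := by
  exact CliffordAlgebra.contractLeft_ι_mul (Q := 0) _ v x

theorem iv_mul_self (v : Module.Dual k (Fin (n+1) → k)) : iv v * iv v = (0 : Lam k n) :=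
  ExteriorAlgebra.ι_sq_zero v

theorem iv_anti (v w : Module.Dual k (Fin (n+1) → k)) : iv v * iv w = - (iv w * iv v : Lam k n) :=
  eq_neg_of_add_eq_zero_left (ExteriorAlgebra.ι_add_mul_swap v w)

noncomputable def eps : Lam k n →ₗ[k] k := (ExteriorAlgebra.algebraMapInv).toLinearMap

theorem eps_one : eps (1 : Lam k n) = 1 := by simp [eps]

theorem eps_iv_mul (v) (x : Lam k n) : eps (iv v * x) = 0 := by
  simp [eps, iv, ExteriorAlgebra.algebraMapInv]

theorem iv_sum {ι : Type*} (s : Finset ι) (f : ι → k) (v : ι → Module.Dual k (Fin (n+1) → k)) :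
    iv (∑ j ∈ s, f j • v j) = (∑ j ∈ s, f j • iv (v j) : Lam k n) := by
  simp [iv]

variable {M : Type*} [AddCommGroup M] [Module k M] [Module (MvP k n) M] [IsScalarTower k (MvP k n) M]

noncomputable def bd : (Lam k n →ₗ[k] M) →ₗ[MvP k n] (Lam k n →ₗ[k] M) where
  toFun z := ∑ i, (X i : MvP k n) • (z ∘ₗ LinearMap.mulLeft k (iv (LinearMap.proj i)))
  map_add' := by
    intro x y
    simp [LinearMap.add_comp, Finset.sum_add_distrib]
  map_smul' := by
    intro s x
    simp only [Finset.smul_sum, RingHom.id_apply]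
    refine Finset.sum_congr rfl fun i _ => ?_
    ext ω
    simp [smul_smul, mul_comm]

theorem bd_apply (z : Lam k n →ₗ[k] M) (ω : Lam k n) :
    bd z ω = ∑ i, (X i : MvP k n) • z (iv (LinearMap.proj i) * ω) := by
  simp [bd, LinearMap.sum_apply]

theorem bd_basis {ι : Type*} [Fintype ι] (b : Module.Basis ι k (Fin (n+1) → k))
    (z : Lam k n →ₗ[k] M) (ω : Lam k n) :
    bd z ω = ∑ j, lin (b j) • z (iv (b.coord j) * ω) := by
  have h : ∀ i : Fin (n+1), (LinearMap.proj i : Module.Dual k (Fin (n+1) → k)) =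
      ∑ j, (b j i) • b.coord j := by
    intro i
    exact (b.sum_dual_apply_smul_coord (LinearMap.proj i)).symm
  rw [bd_apply]
  calc _ = ∑ i, ∑ j, (X i : MvP k n) • (b j i) • z (iv (b.coord j) * ω) := by
        refine Finset.sum_congr rfl fun i _ => ?_
        rw [h i, iv_sum, Finset.sum_mul, map_sum, Finset.smul_sum]
        simp only [smul_mul_assoc, map_smul]
    _ = _ := by
        rw [Finset.sum_comm]
        refine Finset.sum_congr rfl fun j _ => ?_
        rw [lin, Finset.sum_smul]
        refine Finset.sum_congr rfl fun i _ => ?_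
        rw [smul_assoc, smul_comm]

theorem bd_ct (c : Fin (n+1) → k) (z : Lam k n →ₗ[k] M) :
    bd (z ∘ₗ ct c) = lin c • z - (bd z) ∘ₗ ct c := by
  refine LinearMap.ext fun ω => ?_
  simp only [bd_apply, LinearMap.comp_apply, LinearMap.sub_apply, LinearMap.smul_apply, ct_iv_mul,
    map_sub, smul_sub, Finset.sum_sub_distrib]
  congr 1
  rw [lin, Finset.sum_smul]
  refine Finset.sum_congr rfl fun i _ => ?_
  rw [map_smul, smul_assoc, smul_comm]
  rfl

/-- left multiplication with sign commutation -/
theorem bd_mulLeft (m : Lam k n) (s : ℤ) (hm : ∀ v, iv v * m = s • (m * iv v)) (hs : s * s = 1)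
    (z : Lam k n →ₗ[k] M) :
    bd (z ∘ₗ LinearMap.mulLeft k m) = s • ((bd z) ∘ₗ LinearMap.mulLeft k m) := by
  refine LinearMap.ext fun ω => ?_
  simp only [bd_apply, LinearMap.comp_apply, LinearMap.smul_apply, LinearMap.mulLeft_apply,
    Finset.smul_sum]
  refine Finset.sum_congr rfl fun i _ => ?_
  have : iv (LinearMap.proj i) * (m * ω) = s • (m * (iv (LinearMap.proj i) * ω)) := by
    rw [← mul_assoc, hm, smul_mul_assoc, mul_assoc]
  rw [this, map_zsmul, smul_comm (X i) s, smul_smul, hs, one_smul]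

def Kos (W0 W1 : Submodule k M) : Prop :=
  ∀ z : Lam k n →ₗ[k] M, (∀ ω, z ω ∈ W1) → bd z = 0 → ∃ w : Lam k n →ₗ[k] M,
    (∀ ω, w ω ∈ W0) ∧ bd w = z

end Koszul

section Step
variable {k : Type*} [Field k] {n : ℕ}
variable {M : Type*} [AddCommGroup M] [Module k M] [Module (MvP k n) M] [IsScalarTower k (MvP k n) M]

theorem bd_bd (z : Lam k n →ₗ[k] M) : bd (bd z) = 0 := by
  refine LinearMap.ext fun ω => ?_
  simp only [bd_apply, Finset.smul_sum, smul_smul, LinearMap.zero_apply]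
  rw [← Finset.sum_product']
  refine Finset.sum_involution (fun a _ => (a.2, a.1)) ?_ ?_ ?_ ?_
  · rintro ⟨i, j⟩ _
    simp only [← mul_assoc]
    rw [iv_anti (LinearMap.proj i), mul_comm (X i)]
    simp
  · rintro ⟨i, j⟩ _ h h2
    apply h
    simp only [Prod.mk.injEq] at h2
    obtain ⟨h2, -⟩ := h2
    subst h2
    rw [← mul_assoc, iv_mul_self]
    simp
  · simp
  · simp

theorem lin_homog (c : Fin (n+1) → k) : (lin c).IsHomogeneous 1 := by
  refine IsHomogeneous.sum _ _ _ fun i _ => ?_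
  rw [smul_eq_C_mul]
  exact isHomogeneous_C_mul_X _ _

theorem lin_add (c d : Fin (n+1) → k) : lin (c + d) = lin c + lin d := by
  simp [lin, add_smul, Finset.sum_add_distrib]

theorem lin_smul (a : k) (c : Fin (n+1) → k) : lin (a • c) = a • lin c := by
  simp [lin, Finset.smul_sum, smul_smul]

noncomputable def linL : (Fin (n+1) → k) →ₗ[k] MvP k n := ⟨⟨lin, lin_add⟩, lin_smul⟩

theorem lin_single (i : Fin (n+1)) : lin (Pi.single i (1:k)) = X i := by
  simp [lin, Pi.single_apply]

theorem lin_ne_zero (c : Fin (n+1) → k) (hc : c ≠ 0) : lin c ≠ 0 := by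
  intro h
  apply hc
  funext i
  have := congrArg (coeff (Finsupp.single i 1)) h
  simp only [lin, coeff_sum, coeff_smul, coeff_X, coeff_zero] at this
  simpa [Finsupp.single_left_inj] using this

theorem exists_lin (p : MvP k n) (hp : p.IsHomogeneous 1) : ∃ c, p = lin c := by
  have : p ∈ homogeneousSubmodule (Fin (n+1)) k 1 := hp
  rw [homogeneousSubmodule_one_eq_span_X] at this
  have h2 : Submodule.span k (Set.range (X : Fin (n+1) → MvP k n)) ≤ LinearMap.range (linL (k := k) (n := n)) := by
    rw [Submodule.span_le]
    rintro _ ⟨i, rfl⟩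
    exact ⟨Pi.single i 1, lin_single i⟩
  obtain ⟨c, hc⟩ := h2 this
  exact ⟨c, hc.symm⟩

noncomputable def divX {ι : Type*} (u : ι) : MvPolynomial ι k →ₗ[k] MvPolynomial ι k where
  toFun p := p.divMonomial (Finsupp.single u 1)
  map_add' := by intro x y; exact add_divMonomial _ _ _
  map_smul' := by
    intro a x
    ext m
    simp [coeff_divMonomial]

theorem divX_X_mul {ι : Type*} (u : ι) (p : MvPolynomial ι k) : divX u (X u * p) = p :=
  X_mul_divMonomial u p

theorem divX_X_mul_ne {ι : Type*} (u j : ι) (h : j ≠ u) (p : MvPolynomial ι k) :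
    divX u (X j * p) = X j * divX u p := by
  classical
  ext m
  simp only [divX, LinearMap.coe_mk, AddHom.coe_mk, coeff_divMonomial, coeff_X_mul']
  have : (j ∈ (Finsupp.single u 1 + m).support) ↔ j ∈ m.support := by
    simp [Finsupp.single_apply, h.symm]
  simp only [this]
  split_ifs with h1
  · congr 1
    rw [add_tsub_assoc_of_le]
    simpa [Nat.one_le_iff_ne_zero] using h1
  · rfl

theorem divX_homog {ι : Type*} (u : ι) (q : ℕ) (p : MvPolynomial ι k) (hp : p.IsHomogeneous (q+1)) :
    (divX u p).IsHomogeneous q := by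
  intro m hm
  have h : coeff (Finsupp.single u 1 + m) p ≠ 0 := by
    simpa [divX, coeff_divMonomial] using hm
  have := hp h
  rw [map_add, Finsupp.weight_single] at this
  simp only [Pi.one_apply, smul_eq_mul, mul_one] at this
  omega

theorem exists_D {ι : Type*} [Fintype ι] (b : Module.Basis ι k (Fin (n+1) → k)) (u : ι) :
    ∃ D : MvP k n →ₗ[k] MvP k n, (∀ j, j ≠ u → ∀ s, D (lin (b j) * s) = lin (b j) * D s) ∧
      (∀ s, D (lin (b u) * s) = s) ∧ ∀ q s, s ∈ homogeneousSubmodule (Fin (n+1)) k (q+1) →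
        D s ∈ homogeneousSubmodule (Fin (n+1)) k q := by
  let g : MvPolynomial ι k →ₐ[k] MvP k n := aeval (fun j => lin (b j))
  let f : MvP k n →ₐ[k] MvPolynomial ι k := aeval (fun i => ∑ j, (b.coord j (Pi.single i 1)) • X j)
  have hgf : ∀ s, g (f s) = s := by
    intro s
    have : g.comp f = AlgHom.id k _ := by
      refine MvPolynomial.algHom_ext fun i => ?_
      simp only [g, f, AlgHom.comp_apply, aeval_X, map_sum, map_smul, AlgHom.id_apply]
      have := congrArg linL (b.sum_repr (Pi.single i 1))
      simp only [map_sum, map_smul] at this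
      exact this.trans (lin_single i)
    exact congrArg (fun h => h s) this
  have hfl : ∀ c, f (lin c) = ∑ j, b.coord j c • X j := by
    intro c
    have hc : c = ∑ i, c i • (Pi.single i (1:k)) := by
      funext i; simp [Pi.single_apply]
    simp only [lin, map_sum, map_smul, f, aeval_X, Finset.smul_sum, smul_smul]
    rw [Finset.sum_comm]
    refine Finset.sum_congr rfl fun j _ => ?_
    conv_rhs => rw [hc]
    rw [map_sum, Finset.sum_smul]
    refine Finset.sum_congr rfl fun i _ => ?_
    rw [map_smul, smul_eq_mul]
  have hfb : ∀ j, f (lin (b j)) = X j := by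
    intro j
    classical
    rw [hfl]
    simp [Finsupp.single_apply]
  have hgX : ∀ j, g (X j) = lin (b j) := fun j => by simp [g]
  refine ⟨g.toLinearMap ∘ₗ divX u ∘ₗ f.toLinearMap, ?_, ?_, ?_⟩
  · intro j hj s
    simp [hfb, divX_X_mul_ne _ _ hj, hgX]
  · intro s
    simp [hfb, divX_X_mul, hgf]
  · intro q s hs
    have h1 : (f s).IsHomogeneous (q+1) := by
      have := IsHomogeneous.aeval (n := 1) ((mem_homogeneousSubmodule _ _).1 hs)
        (fun i => ∑ j, (b.coord j (Pi.single i 1)) • (X j : MvPolynomial ι k)) (fun i => by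
        refine IsHomogeneous.sum _ _ _ fun j _ => ?_
        rw [smul_eq_C_mul]
        exact isHomogeneous_C_mul_X _ _)
      simpa [f] using this
    have h2 := divX_homog u q _ h1
    have := IsHomogeneous.aeval (n := 1) h2 (fun j => lin (b j)) (fun j => lin_homog _)
    simpa [g] using this

/-- one reduction step in a free direction -/
theorem reduce_one {ι : Type*} [Fintype ι] (b : Module.Basis ι k (Fin (n+1) → k)) (u : ι)
    (D : MvP k n →ₗ[k] MvP k n) (hD1 : ∀ j, j ≠ u → ∀ s, D (lin (b j) * s) = lin (b j) * D s)
    (hD2 : ∀ s, D (lin (b u) * s) = s)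
    (z : Lam k n →ₗ[k] MvP k n) (hz : bd z = 0) (ω : Lam k n) :
    z ω - bd (D ∘ₗ z ∘ₗ ct (b u)) ω =
      z (ct (b u) (iv (b.coord u) * ω)) - lin (b u) * D (z (ct (b u) (iv (b.coord u) * ω))) := by
  classical
  have h0 : ∑ j, D (lin (b j) * z (iv (b.coord j) * ct (b u) ω)) = 0 := by
    have := congrArg (fun f => D (f (ct (b u) ω))) hz
    simpa [bd_basis b] using this
  have e : ∀ j, b.coord j (b u) = if j = u then 1 else 0 := by
    intro j; simp [Finsupp.single_apply, eq_comm]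
  rw [← Finset.add_sum_erase _ _ (Finset.mem_univ u)] at h0
  have h1 : ∑ j ∈ Finset.univ.erase u, D (lin (b j) * z (iv (b.coord j) * ct (b u) ω)) =
      ∑ j ∈ Finset.univ.erase u, lin (b j) * D (z (iv (b.coord j) * ct (b u) ω)) :=
    Finset.sum_congr rfl fun j hj => hD1 j (Finset.ne_of_mem_erase hj) _
  rw [h1, hD2] at h0
  rw [bd_basis b, ← Finset.add_sum_erase _ _ (Finset.mem_univ u)]
  have h2 : ∑ j ∈ Finset.univ.erase u, lin (b j) • (D ∘ₗ z ∘ₗ ct (b u)) (iv (b.coord j) * ω) =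
      - ∑ j ∈ Finset.univ.erase u, lin (b j) * D (z (iv (b.coord j) * ct (b u) ω)) := by
    rw [← Finset.sum_neg_distrib]
    refine Finset.sum_congr rfl fun j hj => ?_
    have := e j
    rw [if_neg (Finset.ne_of_mem_erase hj)] at this
    simp only [LinearMap.comp_apply, ct_iv_mul, this]
    simp
  rw [h2]
  have := e u
  rw [if_pos rfl] at this
  simp only [LinearMap.comp_apply, ct_iv_mul, this, smul_eq_mul, map_sub, one_smul]
  linear_combination h0

theorem reduce_step {ι : Type*} [Fintype ι] (b : Module.Basis ι k (Fin (n+1) → k)) (u : ι)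
    (D : MvP k n →ₗ[k] MvP k n) (hD1 : ∀ j, j ≠ u → ∀ s, D (lin (b j) * s) = lin (b j) * D s)
    (hD2 : ∀ s, D (lin (b u) * s) = s)
    (W0 W1 : Submodule k (MvP k n)) (hW : ∀ s ∈ W1, D s ∈ W0)
    (hW' : ∀ s ∈ W0, lin (b u) * s ∈ W1)
    (z : Lam k n →ₗ[k] MvP k n) (hz1 : ∀ ω, z ω ∈ W1) (hz : bd z = 0) :
    ∃ w : Lam k n →ₗ[k] MvP k n, (∀ ω, w ω ∈ W0) ∧ (∀ ω, (z - bd w) ω ∈ W1) ∧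
      (∀ ω, (z - bd w) (iv (b.coord u) * ω) = 0) ∧
      ∀ t, t ≠ u → (∀ ω, z (iv (b.coord t) * ω) = 0) → ∀ ω, (z - bd w) (iv (b.coord t) * ω) = 0 := by
  classical
  have e : ∀ j, b.coord j (b u) = if j = u then 1 else 0 := by
    intro j; simp [Finsupp.single_apply, eq_comm]
  refine ⟨D ∘ₗ z ∘ₗ ct (b u), fun ω => hW _ (hz1 _), ?_, ?_, ?_⟩
  · intro ω
    rw [LinearMap.sub_apply, reduce_one b u D hD1 hD2 z hz]
    exact sub_mem (hz1 _) (hW' _ (hW _ (hz1 _)))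
  · intro ω
    rw [LinearMap.sub_apply, reduce_one b u D hD1 hD2 z hz, ← mul_assoc, iv_mul_self]
    simp
  · intro t ht h ω
    have h1 : ct (b u) (iv (b.coord u) * (iv (b.coord t) * ω)) =
        iv (b.coord t) * (ω - iv (b.coord u) * ct (b u) ω) := by
      have h2 := e u
      have h3 := e t
      rw [if_pos rfl] at h2
      rw [if_neg ht] at h3
      rw [ct_iv_mul, ct_iv_mul, h2, h3, mul_sub, mul_sub, ← mul_assoc (iv (b.coord t)),
        iv_anti (b.coord t)]
      simp [mul_assoc]
    rw [LinearMap.sub_apply, reduce_one b u D hD1 hD2 z hz, h1, h]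
    simp

theorem reduce_all {ι : Type*} [Fintype ι] [DecidableEq ι] (b : Module.Basis ι k (Fin (n+1) → k))
    (U : Finset ι)
    (W0 W1 : Submodule k (MvP k n))
    (hU : ∀ u ∈ U, ∃ D : MvP k n →ₗ[k] MvP k n,
      (∀ j, j ≠ u → ∀ s, D (lin (b j) * s) = lin (b j) * D s) ∧
      (∀ s, D (lin (b u) * s) = s) ∧ ∀ s ∈ W1, D s ∈ W0)
    (hW' : ∀ u, ∀ s ∈ W0, lin (b u) * s ∈ W1)
    (z : Lam k n →ₗ[k] MvP k n) (hz1 : ∀ ω, z ω ∈ W1) (hz : bd z = 0) :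
    ∃ w : Lam k n →ₗ[k] MvP k n, (∀ ω, w ω ∈ W0) ∧ (∀ ω, (z - bd w) ω ∈ W1) ∧
      ∀ u ∈ U, ∀ ω, (z - bd w) (iv (b.coord u) * ω) = 0 := by
  induction U using Finset.induction_on with
  | empty => exact ⟨0, by simp, by simpa using hz1, by simp⟩
  | insert u U hu ih =>
    obtain ⟨w, h1, h2, h3⟩ := ih fun u hu => hU u (Finset.mem_insert_of_mem hu)
    obtain ⟨D, d1, d2, d3⟩ := hU u (Finset.mem_insert_self _ _)
    obtain ⟨w', g1, g2, g3, g4⟩ := reduce_step b u D d1 d2 W0 W1 d3 (hW' u) (z - bd w) h2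
      (by rw [map_sub, hz, bd_bd, sub_zero])
    have : z - bd w - bd w' = z - bd (w + w') := by rw [map_add]; abel
    rw [this] at g2 g3 g4
    refine ⟨w + w', fun ω => add_mem (h1 ω) (g1 ω), g2, ?_⟩
    intro t ht
    by_cases htu : t = u
    · subst htu; exact g3
    · exact g4 t htu (h3 t (Finset.mem_of_mem_insert_of_ne ht htu))

end Step

section Arr
variable {k : Type*} [Field k] {n : ℕ}

theorem bd_eps (f : MvP k n) : bd ((eps (k := k) (n := n)).smulRight f) = 0 := by
  refine LinearMap.ext fun ω => ?_
  rw [bd_apply]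
  simp [eps_iv_mul]

theorem eps_bdry (q : ℕ) (f : MvP k n) (hf : f ∈ homogeneousSubmodule (Fin (n+1)) k (q+1)) :
    ∃ w : Lam k n →ₗ[k] MvP k n, (∀ ω, w ω ∈ homogeneousSubmodule (Fin (n+1)) k q) ∧
      bd w = (eps (k := k) (n := n)).smulRight f := by
  rw [← homogeneousSubmodule_one_pow, pow_succ'] at hf
  induction hf using Submodule.mul_induction_on' with
  | mem_mul_mem l hl g hg =>
    rw [homogeneousSubmodule_one_pow] at hg
    obtain ⟨c, rfl⟩ := exists_lin l hl
    refine ⟨(eps (k := k) (n := n)).smulRight g ∘ₗ ct c, ?_, ?_⟩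
    · intro ω
      exact Submodule.smul_mem _ _ hg
    · rw [bd_ct, bd_eps]
      refine LinearMap.ext fun ω => ?_
      simp
  | add x _ y _ hx hy =>
    obtain ⟨w, h1, h2⟩ := hx
    obtain ⟨w', h1', h2'⟩ := hy
    refine ⟨w + w', fun ω => add_mem (h1 ω) (h1' ω), ?_⟩
    rw [map_add, h2, h2']
    refine LinearMap.ext fun ω => ?_
    simp

theorem kos_S (q : ℕ) : Kos (n := n) (homogeneousSubmodule (Fin (n+1)) k q)
    (homogeneousSubmodule (Fin (n+1)) k (q+1)) := by
  intro z hz1 hz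
  let b := Pi.basisFun k (Fin (n+1))
  obtain ⟨w, h1, h2, h3⟩ := reduce_all b Finset.univ (homogeneousSubmodule (Fin (n+1)) k q)
    (homogeneousSubmodule (Fin (n+1)) k (q+1)) (by
      intro u _
      obtain ⟨D, d1, d2, d3⟩ := exists_D b u
      exact ⟨D, d1, d2, d3 q⟩) (by
      intro u s hs
      have := (lin_homog (b u)).mul hs
      exact (add_comm 1 q) ▸ this) z hz1 hz
  obtain ⟨w', g1, g2⟩ := eps_bdry q _ (h2 1)
  have h4 : ∀ v ω, (z - bd w) (iv v * ω) = 0 := by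
    intro v ω
    rw [← b.sum_dual_apply_smul_coord v, iv_sum, Finset.sum_mul, map_sum]
    refine Finset.sum_eq_zero fun j _ => ?_
    rw [smul_mul_assoc, map_smul, h3 j (Finset.mem_univ _), smul_zero]
  have h5 : z - bd w = (eps (k := k) (n := n)).smulRight ((z - bd w) 1) := by
    refine LinearMap.ext fun ω => ?_
    induction ω using CliffordAlgebra.left_induction with
    | algebraMap r =>
      rw [Algebra.algebraMap_eq_smul_one, map_smul, map_smul, LinearMap.smulRight_apply, eps_one,
        one_smul]
    | add x y hx hy => rw [map_add, hx, hy, map_add]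
    | ι_mul x m hx =>
      rw [LinearMap.smulRight_apply]
      erw [h4 m x, eps_iv_mul]
      simp
  refine ⟨w + w', fun ω => add_mem (h1 ω) (g1 ω), ?_⟩
  rw [map_add, g2, ← h5]
  abel

theorem step_E (c : Fin (n+1) → k) (v : Module.Dual k (Fin (n+1) → k)) (hvc : v c = 1)
    (Q0 Q1 Q2 W1 W2 : Submodule k (MvP k n)) (hWQ1 : W1 ≤ Q1) (hWQ2 : W2 ≤ Q2)
    (hy0 : ∀ s ∈ Q0, lin c * s ∈ W1) (hy1 : ∀ s ∈ Q1, lin c * s ∈ W2)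
    (hK0 : Kos (n := n) Q0 Q1) (hK1 : Kos (n := n) Q1 Q2)
    (m : Lam k n) (s : ℤ) (hs : s * s = 1) (hm : ∀ v, iv v * m = s • (m * iv v))
    (hct : ∀ ω, ct c (m * ω) = s • (m * ct c ω))
    (H : ∀ z : Lam k n →ₗ[k] MvP k n, (∀ ω, z ω ∈ W2) → bd z = 0 →
      ∃ u : Lam k n →ₗ[k] MvP k n, (∀ ω, u ω ∈ W1) ∧ bd u = z ∘ₗ LinearMap.mulLeft k (iv v * m))
    (z : Lam k n →ₗ[k] MvP k n) (hz1 : ∀ ω, z ω ∈ W2) (hz : bd z = 0) :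
      ∃ u : Lam k n →ₗ[k] MvP k n, (∀ ω, u ω ∈ W1) ∧ bd u = z ∘ₗ LinearMap.mulLeft k m := by
  obtain ⟨w, hw1, hw⟩ := hK1 z (fun ω => hWQ2 (hz1 ω)) hz
  obtain ⟨u, hu1, hu⟩ := H (z ∘ₗ ct c - lin c • w)
    (fun ω => sub_mem (hz1 _) (hy1 _ (hw1 ω)))
    (by rw [map_sub, bd_ct, map_smul, hw, hz]; simp)
  obtain ⟨u', hu1', hu'⟩ := H z hz1 hz
  have hvm : ∀ v', iv v' * (iv v * m) = (-s) • ((iv v * m) * iv v') := by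
    intro v'
    rw [← mul_assoc, iv_anti v' v, neg_mul, mul_assoc, hm, neg_smul, mul_smul_comm, mul_assoc]
  obtain ⟨t, ht1, ht⟩ := hK0 (s • u' + w ∘ₗ LinearMap.mulLeft k (iv v * m))
    (fun ω => add_mem (zsmul_mem (hWQ1 (hu1' ω)) s) (hw1 _))
    (by
      rw [map_add, map_zsmul, hu', bd_mulLeft _ (-s) hvm (by linarith), hw]
      simp)
  refine ⟨u - s • (u' ∘ₗ ct c) + lin c • t, fun ω => ?_, ?_⟩
  · exact add_mem (sub_mem (hu1 ω) (zsmul_mem (hu1' _) s)) (hy0 _ (ht1 ω))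
  · rw [map_add, map_sub, map_zsmul, bd_ct, map_smul, ht, hu, hu']
    refine LinearMap.ext fun ω => ?_
    simp only [LinearMap.add_apply, LinearMap.sub_apply, LinearMap.smul_apply,
      LinearMap.comp_apply, LinearMap.mulLeft_apply]
    rw [mul_assoc, ct_iv_mul, hvc, hct, mul_smul_comm, mul_assoc, map_sub, map_zsmul, smul_sub,
      smul_add, one_smul, smul_comm (lin c) s]
    abel

noncomputable def mon {ι : Type*} (b : Module.Basis ι k (Fin (n+1) → k)) (l : List ι) : Lam k n :=
  (l.map (fun j => iv (b.coord j))).prod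

theorem mon_comm {ι : Type*} (b : Module.Basis ι k (Fin (n+1) → k)) (l : List ι) (v) :
    iv v * mon b l = ((-1 : ℤ) ^ l.length) • (mon b l * iv v) := by
  induction l with
  | nil => simp [mon]
  | cons a l ih =>
    have : mon b (a :: l) = iv (b.coord a) * mon b l := by simp [mon]
    rw [this, ← mul_assoc, iv_anti v, neg_mul, mul_assoc, ih, List.length_cons, pow_succ,
      mul_smul_comm, mul_assoc]
    simp

theorem mon_ct {ι : Type*} (b : Module.Basis ι k (Fin (n+1) → k)) (l : List ι) (a : ι)
    (ha : a ∉ l) (ω) :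
    ct (b a) (mon b l * ω) = ((-1 : ℤ) ^ l.length) • (mon b l * ct (b a) ω) := by
  induction l with
  | nil => simp [mon]
  | cons i l ih =>
    have : mon b (i :: l) = iv (b.coord i) * mon b l := by simp [mon]
    have h2 : b.coord i (b a) = 0 := by
      classical
      have : a ≠ i := fun h => ha (by simp [h])
      simp [Finsupp.single_apply, this]
    rw [this, mul_assoc, ct_iv_mul, h2, ih (fun h => ha (List.mem_cons_of_mem _ h)),
      List.length_cons, pow_succ, mul_smul_comm, mul_assoc]
    simp

theorem mon_mem {ι : Type*} (b : Module.Basis ι k (Fin (n+1) → k)) (l : List ι) (a : ι)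
    (ha : a ∈ l) : iv (b.coord a) * mon b l = 0 := by
  induction l with
  | nil => simp at ha
  | cons i l ih =>
    have : mon b (i :: l) = iv (b.coord i) * mon b l := by simp [mon]
    rw [this, ← mul_assoc]
    by_cases h : a = i
    · subst h; rw [iv_mul_self, zero_mul]
    · rw [iv_anti, neg_mul, mul_assoc, ih (by simpa [h] using ha)]; simp

theorem sign_sq (m : ℕ) : ((-1 : ℤ) ^ m) * ((-1 : ℤ) ^ m) = 1 := by
  rw [← mul_pow]; simp

/-- graded piece of an ideal -/
noncomputable def pc (J : Ideal (MvP k n)) (q : ℕ) : Submodule k (MvP k n) :=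
  J.restrictScalars k ⊓ homogeneousSubmodule (Fin (n+1)) k q

theorem pc_lin (J J' : Ideal (MvP k n)) (c) (h : ∀ s ∈ J, lin c * s ∈ J') (q : ℕ) (s) (hs : s ∈ pc J q) :
    lin c * s ∈ pc J' (q+1) := by
  refine ⟨h s hs.1, ?_⟩
  have := (lin_homog c).mul hs.2
  exact (add_comm 1 q) ▸ this

theorem arrangement_kos (d : ℕ) : ∀ (I : Fin d → Ideal (MvP k n)), (∀ i, IsLinearIdeal (I i)) →
    ∀ q, d ≤ q → Kos (n := n) (pc (⨅ i, I i) q) (pc (⨅ i, I i) (q+1)) := by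
  classical
  induction d with
  | zero =>
    intro I _ q _
    have : ∀ q, pc (⨅ i, I i) q = homogeneousSubmodule (Fin (n+1)) k q := by
      intro q
      simp [pc]
    rw [this, this]
    exact kos_S q
  | succ d ih =>
    intro I hI q hq
    obtain ⟨q, rfl⟩ : ∃ q', q = q' + 1 := ⟨q - 1, by omega⟩
    have hdq : d ≤ q := by omega
    set J := ⨅ i, I i with hJ
    let P : Set (Fin (n+1) → k) := {c | ∃ i, lin c ∈ I i}
    obtain ⟨B, hBP, hPB, hBli⟩ := exists_linearIndependent k P
    have hBli' : LinearIndepOn k id B := hBli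
    let b := Module.Basis.extend hBli'
    have hb : ∀ j, b j = j := fun j => Module.Basis.extend_apply_self hBli' j
    have : Fintype (hBli'.extend (Set.subset_univ B)) := 
      Module.Basis.fintypeIndexOfRankLtAleph0 b (Module.rank_lt_aleph0 k _)
    let A : Finset (hBli'.extend (Set.subset_univ B)) := Finset.univ.filter fun j => (j : Fin (n+1) → k) ∈ B
    have hBA : ∀ x ∈ B, ∃ j ∈ A, b j = x := by
      intro x hx
      exact ⟨⟨x, hBli'.subset_extend _ hx⟩, by simp [A, hx], hb _⟩
    -- generators
    have hgen : ∀ i, ∃ T : Set (MvP k n), I i = Ideal.span T ∧ ∀ t ∈ T, ∃ c ∈ Submodule.span k B, t = lin c := by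
      intro i
      obtain ⟨T, hT, hIT⟩ := hI i
      refine ⟨T, hIT, fun t ht => ?_⟩
      obtain ⟨c, rfl⟩ := exists_lin t (hT ht)
      refine ⟨c, ?_, rfl⟩
      rw [hPB]
      refine Submodule.subset_span ⟨i, ?_⟩
      rw [hIT]
      exact Ideal.subset_span ht
    by_cases hA : A = ∅
    · -- all ideals are zero
      have hB : Submodule.span k B = ⊥ := by
        rw [Submodule.span_eq_bot]
        intro x hx
        obtain ⟨j, hj, _⟩ := hBA x hx
        simp [hA] at hj
      have hI0 : I 0 = ⊥ := by
        obtain ⟨T, hT, h⟩ := hgen 0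
        rw [hT, Ideal.span_eq_bot]
        intro t ht
        obtain ⟨c, hc, rfl⟩ := h t ht
        rw [hB, Submodule.mem_bot] at hc
        subst hc
        simp [lin]
      intro z hz1 _
      refine ⟨0, by simp, ?_⟩
      rw [map_zero]
      refine LinearMap.ext fun ω => ?_
      have h1 : z ω ∈ J := (hz1 ω).1
      have h2 : z ω ∈ I 0 := (iInf_le I 0) h1
      rw [hI0] at h2
      simpa using h2.symm
    -- top claim
    have htop : ∀ z : Lam k n →ₗ[k] MvP k n, (∀ ω, z ω ∈ pc J (q+1+1)) → bd z = 0 →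
        ∃ u : Lam k n →ₗ[k] MvP k n, (∀ ω, u ω ∈ pc J (q+1)) ∧
          bd u = z ∘ₗ LinearMap.mulLeft k (mon b A.toList) := by
      intro z hz1 hz
      obtain ⟨w, h1, h2, h3⟩ := reduce_all b Aᶜ (pc J (q+1)) (pc J (q+1+1)) (by
        intro u hu
        obtain ⟨D, d1, d2, d3⟩ := exists_D b u
        refine ⟨D, d1, d2, fun s hs => ⟨?_, d3 _ _ hs.2⟩⟩
        have hDc : ∀ c ∈ Submodule.span k B, ∀ s, D (lin c * s) = lin c * D s := by
          intro c hc
          induction hc using Submodule.span_induction with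
          | mem x hx =>
            obtain ⟨j, hj, rfl⟩ := hBA x hx
            refine d1 j ?_
            rintro rfl
            simp [hj] at hu
          | zero => simp [lin]
          | add x y _ _ hx hy => intro s; rw [lin_add, add_mul, map_add, hx, hy, add_mul]
          | smul a x _ hx => intro s; rw [lin_smul, smul_mul_assoc, map_smul, hx, smul_mul_assoc]
        have hs1 : s ∈ J := hs.1
        show D s ∈ J
        rw [hJ, Ideal.mem_iInf] at hs1 ⊢
        intro i
        have hs2 := hs1 i
        obtain ⟨T, hT, h⟩ := hgen i
        rw [hT] at hs2 ⊢
        clear hs hs1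
        induction hs2 using Submodule.span_induction with
        | mem x hx =>
          obtain ⟨c, hc, rfl⟩ := h x hx
          have := hDc c hc 1
          rw [mul_one] at this
          rw [this]
          exact Ideal.mul_mem_right _ _ (Ideal.subset_span hx)
        | zero => simp
        | add x y _ _ hx hy => rw [map_add]; exact add_mem hx hy
        | smul a x hx' hx0 =>
          clear hx0
          induction hx' using Submodule.span_induction generalizing a with
          | mem x hx =>
            obtain ⟨c, hc, rfl⟩ := h x hx
            rw [smul_eq_mul, mul_comm, hDc c hc]
            exact Ideal.mul_mem_right _ _ (Ideal.subset_span hx)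
          | zero => simp
          | add x y _ _ hx hy => rw [smul_add, map_add]; exact add_mem (hx _) (hy _)
          | smul a' x _ hx => rw [smul_smul]; exact hx _)
        (fun u s hs => pc_lin J J _ (fun s hs => Ideal.mul_mem_left _ _ hs) _ s hs) z hz1 hz
      have hcomm := mon_comm b A.toList
      set sg := (-1 : ℤ) ^ A.toList.length with hsg
      have hsq : sg * sg = 1 := sign_sq _
      refine ⟨sg • (w ∘ₗ LinearMap.mulLeft k (mon b A.toList)), fun ω => zsmul_mem (h1 _) _, ?_⟩
      rw [map_zsmul, bd_mulLeft _ sg hcomm hsq, smul_smul, hsq, one_smul]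
      have hz' : bd (z - bd w) = 0 := by rw [map_sub, hz, bd_bd, sub_zero]
      have hzero : (z - bd w) ∘ₗ LinearMap.mulLeft k (mon b A.toList) = 0 := by
        generalize z - bd w = z' at *
        obtain ⟨a, l, hl⟩ : ∃ a l, A.toList = a :: l := by
          cases h : A.toList with
          | nil => exact absurd (Finset.toList_eq_nil.1 h) hA
          | cons a l => exact ⟨a, l, rfl⟩
        refine LinearMap.ext fun ω => ?_
        have e1 := congrArg (fun f => f (mon b l * ω)) hz'
        simp only [bd_basis b, LinearMap.zero_apply] at e1
        rw [Finset.sum_eq_single a] at e1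
        · rw [hl]
          have : mon b (a :: l) = iv (b.coord a) * mon b l := by simp [mon]
          rw [LinearMap.comp_apply, LinearMap.mulLeft_apply, this, mul_assoc]
          exact (smul_eq_zero.1 e1).resolve_left (lin_ne_zero _ (b.ne_zero a))
        · intro j _ hj
          by_cases hjA : j ∈ A
          · have : j ∈ l := by
              rw [← Finset.mem_toList, hl] at hjA
              simpa [hj] using hjA
            rw [← mul_assoc, mon_mem b l j this]
            simp
          · rw [h3 j (by simpa using hjA), smul_zero]
        · simp
      refine LinearMap.ext fun ω => ?_
      have := congrArg (fun f => f ω) hzero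
      simp only [LinearMap.comp_apply, LinearMap.sub_apply, LinearMap.zero_apply] at this
      exact (sub_eq_zero.1 this).symm
    -- descend
    have hdesc : ∀ l : List (hBli'.extend (Set.subset_univ B)), l.Nodup → (∀ a ∈ l, a ∈ A) →
        (∀ z : Lam k n →ₗ[k] MvP k n, (∀ ω, z ω ∈ pc J (q+1+1)) → bd z = 0 →
        ∃ u : Lam k n →ₗ[k] MvP k n, (∀ ω, u ω ∈ pc J (q+1)) ∧
          bd u = z ∘ₗ LinearMap.mulLeft k (mon b l)) →
        Kos (n := n) (pc J (q+1)) (pc J (q+1+1)) := by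
      intro l
      induction l with
      | nil =>
        intro _ _ h z hz1 hz
        obtain ⟨u, h1, h2⟩ := h z hz1 hz
        refine ⟨u, h1, h2.trans ?_⟩
        refine LinearMap.ext fun ω => ?_
        simp [mon]
      | cons a l ihl =>
        intro hnd hlA h
        rw [List.nodup_cons] at hnd
        refine ihl hnd.2 (fun a ha => hlA a (List.mem_cons_of_mem _ ha)) ?_
        have haB : b a ∈ P := by
          have := hlA a (by simp)
          rw [hb]
          exact hBP (by simpa [A] using this)
        obtain ⟨i, hi⟩ := haB
        have hJJ : J ≤ ⨅ j, I (i.succAbove j) := le_iInf fun j => iInf_le _ _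
        have hmul : ∀ s ∈ ⨅ j, I (i.succAbove j), lin (b a) * s ∈ J := by
          intro s hs
          rw [Ideal.mem_iInf] at hs
          rw [hJ, Ideal.mem_iInf]
          intro j
          rcases Fin.eq_self_or_eq_succAbove i j with rfl | ⟨j, rfl⟩
          · exact Ideal.mul_mem_right _ _ hi
          · exact Ideal.mul_mem_left _ _ (hs j)
        have hmon : mon b (a :: l) = iv (b.coord a) * mon b l := by simp [mon]
        rw [hmon] at h
        have hK := ih (fun j => I (i.succAbove j)) (fun j => hI _)
        exact step_E (b a) (b.coord a) (by simp) (pc (⨅ j, I (i.succAbove j)) q)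
          (pc (⨅ j, I (i.succAbove j)) (q+1)) (pc (⨅ j, I (i.succAbove j)) (q+1+1))
          (pc J (q+1)) (pc J (q+1+1)) (fun s hs => ⟨hJJ hs.1, hs.2⟩) (fun s hs => ⟨hJJ hs.1, hs.2⟩)
          (pc_lin _ _ _ hmul _) (pc_lin _ _ _ hmul _) (hK q hdq) (hK (q+1) (by omega))
          (mon b l) ((-1)^l.length) (sign_sq _) (mon_comm b l) (mon_ct b l a hnd.1) h
    exact hdesc A.toList (Finset.nodup_toList A) (fun a ha => Finset.mem_toList.1 ha) htop

end Arr

section Res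
variable {k : Type*} [Field k] {n : ℕ}
variable {M : Type*} [AddCommGroup M] [Module k M] [Module (MvP k n) M] [IsScalarTower k (MvP k n) M]
variable {M' : Type*} [AddCommGroup M'] [Module k M'] [Module (MvP k n) M'] [IsScalarTower k (MvP k n) M']

structure GrM (G : ℕ → Submodule k M) (pr : ℕ → M →ₗ[k] M) : Prop where
  mem : ∀ q x, pr q x ∈ G q
  self : ∀ q, ∀ x ∈ G q, pr q x = x
  other : ∀ p q, ∀ x ∈ G p, p ≠ q → pr q x = 0
  sum : ∀ x, ∃ Q, x = ∑ q ∈ Finset.range Q, pr q x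
  smul : ∀ p q, ∀ s ∈ homogeneousSubmodule (Fin (n+1)) k p, ∀ x ∈ G q, s • x ∈ G (p + q)

theorem sum_hc (s : MvP k n) (K : ℕ) (hK : s.totalDegree < K) :
    ∑ j ∈ Finset.range K, homogeneousComponent j s = s := by
  conv_rhs => rw [← sum_homogeneousComponent s]
  symm
  refine Finset.sum_subset (by simpa using hK) ?_
  intro x _ hx
  exact homogeneousComponent_eq_zero _ _ (by simpa using hx)

theorem grM_S : GrM (n := n) (homogeneousSubmodule (Fin (n+1)) k) homogeneousComponent where
  mem q x := homogeneousComponent_mem _ _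
  self q x hx := homogeneousComponent_eq_self hx
  other p q x hx h := by rw [homogeneousComponent_of_mem hx, if_neg (Ne.symm h)]
  sum x := ⟨_, (sum_homogeneousComponent x).symm⟩
  smul p q s hs x hx := IsHomogeneous.mul hs hx

noncomputable def fpc {ρ : ℕ} (e : Fin ρ → ℕ) (q : ℕ) : Submodule k (Fin ρ → MvP k n) :=
  Submodule.pi Set.univ (fun β => if e β ≤ q then homogeneousSubmodule (Fin (n+1)) k (q - e β) else ⊥)

noncomputable def fpr {ρ : ℕ} (e : Fin ρ → ℕ) (q : ℕ) :
    (Fin ρ → MvP k n) →ₗ[k] (Fin ρ → MvP k n) :=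
  LinearMap.pi (fun β => (if e β ≤ q then homogeneousComponent (q - e β) else 0) ∘ₗ LinearMap.proj β)

theorem mem_fpc {ρ : ℕ} {e : Fin ρ → ℕ} {q : ℕ} {f : Fin ρ → MvP k n} :
    f ∈ fpc e q ↔ ∀ β, f β ∈ (if e β ≤ q then homogeneousSubmodule (Fin (n+1)) k (q - e β) else ⊥) := by
  simp [fpc, Submodule.mem_pi]

theorem fpr_apply {ρ : ℕ} (e : Fin ρ → ℕ) (q : ℕ) (f : Fin ρ → MvP k n) (β) :
    fpr e q f β = if e β ≤ q then homogeneousComponent (q - e β) (f β) else 0 := by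
  simp only [fpr, LinearMap.pi_apply, LinearMap.comp_apply, LinearMap.proj_apply]
  split_ifs <;> rfl

theorem grM_free {ρ : ℕ} (e : Fin ρ → ℕ) : GrM (k := k) (n := n) (M := Fin ρ → MvP k n) (fpc e) (fpr e) where
  mem q x := by
    rw [mem_fpc]
    intro β
    rw [fpr_apply]
    split_ifs
    · exact homogeneousComponent_mem _ _
    · simp
  self q x hx := by
    rw [mem_fpc] at hx
    funext β
    have := hx β
    rw [fpr_apply]
    split_ifs at this ⊢
    · exact homogeneousComponent_eq_self this
    · simpa using this.symm
  other p q x hx h := by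
    rw [mem_fpc] at hx
    funext β
    have := hx β
    rw [fpr_apply]
    split_ifs at this ⊢
    · rw [homogeneousComponent_of_mem this, if_neg (by omega)]; rfl
    · have : x β = 0 := by simpa using this
      rw [this, map_zero]; rfl
    · rfl
    · rfl
  sum x := by
    refine ⟨∑ β, (e β + ((x β).totalDegree + 1)), ?_⟩
    funext β
    rw [Finset.sum_apply]
    simp only [fpr_apply]
    have hle : e β + ((x β).totalDegree + 1) ≤ ∑ β, (e β + ((x β).totalDegree + 1)) :=
      Finset.single_le_sum (f := fun β => e β + ((x β).totalDegree + 1)) (fun _ _ => Nat.zero_le _)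
        (Finset.mem_univ β)
    obtain ⟨K, hK⟩ := Nat.exists_eq_add_of_le (le_trans (Nat.le_add_right _ _) hle)
    rw [hK, Finset.sum_range_add]
    rw [Finset.sum_eq_zero, zero_add]
    · simp only [Nat.le_add_right, if_true, Nat.add_sub_cancel_left]
      rw [sum_hc _ K (by omega)]
    · intro q hq
      rw [if_neg (by simpa using hq)]
  smul p q s hs x hx := by
    rw [mem_fpc] at hx ⊢
    intro β
    have := hx β
    split_ifs at this with h
    · rw [if_pos (by omega)]
      have h2 := IsHomogeneous.mul hs this
      rw [show p + q - e β = p + (q - e β) by omega]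
      exact h2
    · have : x β = 0 := by simpa using this
      simp [this]

theorem bd_comp (δ : M →ₗ[MvP k n] M') (z : Lam k n →ₗ[k] M) :
    bd ((δ.restrictScalars k) ∘ₗ z) = (δ.restrictScalars k) ∘ₗ bd z := by
  refine LinearMap.ext fun ω => ?_
  simp [bd_apply]

theorem lift_vals (p : M →ₗ[k] M') (W : Submodule k M) (W' : Submodule k M') (h : W' ≤ W.map p)
    (z : Lam k n →ₗ[k] M') (hz : ∀ ω, z ω ∈ W') :
    ∃ y : Lam k n →ₗ[k] M, (∀ ω, y ω ∈ W) ∧ p ∘ₗ y = z := by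
  let f : W →ₗ[k] (W.map p) := p.submoduleMap W
  have hf : Function.Surjective f := p.submoduleMap_surjective W
  let z' : Lam k n →ₗ[k] (W.map p) := z.codRestrict _ (fun ω => h (hz ω))
  obtain ⟨y, hy⟩ := Module.projective_lifting_property f z' hf
  refine ⟨W.subtype ∘ₗ y, fun ω => (y ω).2, ?_⟩
  refine LinearMap.ext fun ω => ?_
  have := congrArg (fun g => ((g ω : W.map p) : M')) hy
  exact this

theorem kos_free {ρ : ℕ} (e : Fin ρ → ℕ) (r q : ℕ) (he : ∀ β, e β ≤ r) (hq : r ≤ q) :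
    Kos (k := k) (n := n) (M := Fin ρ → MvP k n) (fpc e q) (fpc e (q+1)) := by
  intro z hz1 hz
  have : ∀ β, ∃ w : Lam k n →ₗ[k] MvP k n, (∀ ω, w ω ∈ homogeneousSubmodule (Fin (n+1)) k (q - e β)) ∧
      bd w = (LinearMap.proj β : (Fin ρ → MvP k n) →ₗ[k] MvP k n) ∘ₗ z := by
    intro β
    refine kos_S (q - e β) _ ?_ ?_
    · intro ω
      have h := mem_fpc.1 (hz1 ω) β
      have := he β
      rw [if_pos (by omega)] at h
      rw [show q - e β + 1 = q + 1 - e β by omega]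
      exact h
    · have := bd_comp (LinearMap.proj β : (Fin ρ → MvP k n) →ₗ[MvP k n] MvP k n) z
      rw [hz] at this
      refine Eq.trans this ?_
      simp
  choose w hw1 hw using this
  refine ⟨LinearMap.pi w, ?_, ?_⟩
  · intro ω
    rw [mem_fpc]
    intro β
    rw [if_pos ((he β).trans hq)]
    exact hw1 β ω
  · refine LinearMap.ext fun ω => ?_
    funext β
    have h1 := congrArg (fun g => g ω) (hw β)
    refine Eq.trans ?_ h1
    rw [bd_apply, bd_apply, Finset.sum_apply]
    rfl

theorem res_step [IsNoetherian (MvP k n) M] (G : ℕ → Submodule k M) (pr : ℕ → M →ₗ[k] M)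
    (hG : GrM (n := n) G pr) (N : Submodule (MvP k n) M) (hN : ∀ x ∈ N, ∀ q, pr q x ∈ N) (r : ℕ)
    (hK : ∀ q, r ≤ q → Kos (n := n) (N.restrictScalars k ⊓ G q) (N.restrictScalars k ⊓ G (q+1))) :
    ∃ (ρ : ℕ) (e : Fin ρ → ℕ) (δ : (Fin ρ → MvP k n) →ₗ[MvP k n] M),
      LinearMap.range δ = N ∧ (∀ β, δ (Pi.single β 1) ∈ G (e β)) ∧ (∀ β, e β ≤ r) ∧
      (∀ x ∈ LinearMap.ker δ, ∀ q, fpr e q x ∈ LinearMap.ker δ) ∧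
      ∀ q, r + 1 ≤ q → Kos (n := n) ((LinearMap.ker δ).restrictScalars k ⊓ fpc e q)
        ((LinearMap.ker δ).restrictScalars k ⊓ fpc e (q+1)) := by
  let T : Set M := {x | x ∈ N ∧ ∃ q, q ≤ r ∧ x ∈ G q}
  have hT1 : ∀ q, ∀ x ∈ N, x ∈ G q → x ∈ Submodule.span (MvP k n) T := by
    intro q
    induction q with
    | zero => intro x hx hx'; exact Submodule.subset_span ⟨hx, 0, Nat.zero_le _, hx'⟩
    | succ q ih =>
      intro x hx hx'
      by_cases hq : q + 1 ≤ r
      · exact Submodule.subset_span ⟨hx, q+1, hq, hx'⟩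
      · obtain ⟨w, h1, h2⟩ := hK q (by omega) ((eps (k := k) (n := n)).smulRight x)
          (fun ω => Submodule.smul_mem _ _ ⟨hx, hx'⟩) (by
            refine LinearMap.ext fun ω => ?_
            rw [bd_apply]
            simp [eps_iv_mul])
        have h3 := congrArg (fun g => g 1) h2
        simp only [bd_apply, LinearMap.smulRight_apply, eps_one, one_smul] at h3
        rw [← h3]
        exact Submodule.sum_mem _ fun i _ => Submodule.smul_mem _ _ (ih _ (h1 _).1 (h1 _).2)
  have hT : Submodule.span (MvP k n) T = N := by
    apply le_antisymm
    · rw [Submodule.span_le]; exact fun x hx => hx.1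
    · intro x hx
      obtain ⟨Q, hQ⟩ := hG.sum x
      rw [hQ]
      exact Submodule.sum_mem _ fun q _ => hT1 q _ (hN x hx q) (hG.mem q x)
  obtain ⟨T', hT'T, hT'⟩ := (Submodule.fg_span_iff_fg_span_finset_subset (R := MvP k n) T).1
    (IsNoetherian.noetherian _)
  let ρ := T'.card
  let g : Fin ρ → M := fun β => (T'.equivFin.symm β : M)
  have hg : Set.range g = (T' : Set M) := by
    ext x
    constructor
    · rintro ⟨β, rfl⟩; exact (T'.equivFin.symm β).2
    · intro hx
      exact ⟨T'.equivFin ⟨x, hx⟩, by simp [g]⟩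
  have hgT : ∀ β, g β ∈ T := fun β => hT'T (hg ▸ Set.mem_range_self β)
  choose hgN e he hge using hgT
  let δ : (Fin ρ → MvP k n) →ₗ[MvP k n] M := Fintype.linearCombination (MvP k n) g
  have hδ : ∀ f, δ f = ∑ β, f β • g β := fun f => rfl
  have hrange : LinearMap.range δ = N := by
    rw [Fintype.range_linearCombination, hg, ← hT', hT]
  have hδG : ∀ q, ∀ f ∈ fpc e q, δ f ∈ G q := by
    intro q f hf
    rw [hδ]
    refine Submodule.sum_mem _ fun β _ => ?_
    have := mem_fpc.1 hf β
    split_ifs at this with h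
    · have h2 := hG.smul _ _ _ this _ (hge β)
      rwa [Nat.sub_add_cancel h] at h2
    · have : f β = 0 := by simpa using this
      simp [this]
  have hF := grM_free (n := n) (k := k) e
  have hcomm : ∀ f q, δ (fpr e q f) = pr q (δ f) := by
    intro f q
    obtain ⟨Q, hQ⟩ := hF.sum f
    have hz : ∀ q', Q ≤ q' → fpr e q' f = 0 := by
      intro q' hq'
      rw [hQ, map_sum]
      refine Finset.sum_eq_zero fun p hp => ?_
      refine hF.other p q' _ (hF.mem _ _) ?_
      have := Finset.mem_range.1 hp
      omega
    conv_rhs => rw [hQ, map_sum, map_sum]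
    have : ∀ p ∈ Finset.range Q, pr q (δ (fpr e p f)) = if p = q then δ (fpr e q f) else 0 := by
      intro p _
      split_ifs with h
      · subst h; exact hG.self _ _ (hδG _ _ (hF.mem _ _))
      · exact hG.other p q _ (hδG _ _ (hF.mem _ _)) h
    rw [Finset.sum_congr rfl this, Finset.sum_ite_eq']
    split_ifs with h
    · rfl
    · rw [hz q (by simpa using h), map_zero]
  have hsurj : ∀ q, N.restrictScalars k ⊓ G q ≤ (fpc e q).map (δ.restrictScalars k) := by
    rintro q x ⟨hx, hx'⟩
    have : x ∈ N := hx
    rw [← hrange] at this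
    obtain ⟨f, rfl⟩ := this
    refine ⟨fpr e q f, hF.mem _ _, ?_⟩
    exact (hcomm f q).trans (hG.self _ _ hx')
  refine ⟨ρ, e, δ, hrange, ?_, he, ?_, ?_⟩
  · intro β
    have : δ (Pi.single β 1) = g β := by
      classical
      rw [hδ]
      simp [Pi.single_apply]
    rw [this]; exact hge β
  · intro x hx q
    rw [LinearMap.mem_ker] at hx ⊢
    rw [hcomm, hx, map_zero]
  · intro q hq z hz1 hz
    obtain ⟨q, rfl⟩ : ∃ q', q = q' + 1 := ⟨q - 1, by omega⟩
    obtain ⟨w, hw1, hw⟩ := kos_free e r (q+1) he (by omega) z (fun ω => (hz1 ω).2) hz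
    obtain ⟨u, hu1, hu⟩ := hK q (by omega) ((δ.restrictScalars k) ∘ₗ w)
      (fun ω => ⟨by
          show δ (w ω) ∈ N
          rw [← hrange]; exact LinearMap.mem_range_self _ _, hδG _ _ (hw1 ω)⟩) (by
        rw [bd_comp, hw]
        refine LinearMap.ext fun ω => ?_
        exact (hz1 ω).1)
    obtain ⟨y, hy1, hy⟩ := lift_vals (δ.restrictScalars k) _ _ (hsurj q) u hu1
    have hker : ∀ ω, δ ((w - bd y) ω) = 0 := by
      intro ω
      have h1 := bd_comp δ y
      rw [hy, hu] at h1
      have h2 := congrArg (fun g => g ω) h1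
      simp only [LinearMap.comp_apply, LinearMap.restrictScalars_apply] at h2
      rw [LinearMap.sub_apply, map_sub, h2, sub_self]
    refine ⟨w - bd y, fun ω => ⟨hker ω, sub_mem (hw1 ω) ?_⟩, ?_⟩
    · rw [bd_apply]
      refine Submodule.sum_mem _ fun i _ => ?_
      have := hF.smul 1 q (X i) (isHomogeneous_X k i) _ (hy1 (iv (LinearMap.proj i) * ω))
      rw [add_comm 1 q] at this
      exact this
    · rw [map_sub, bd_bd, hw, sub_zero]

structure St (k : Type*) [Field k] (n : ℕ) where
  ρ : ℕ
  e : Fin ρ → ℕ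
  N : Submodule (MvP k n) (Fin ρ → MvP k n)

def St.OK (s : St k n) (r : ℕ) : Prop :=
  (∀ x ∈ s.N, ∀ q, fpr s.e q x ∈ s.N) ∧
  ∀ q, r ≤ q → Kos (n := n) (s.N.restrictScalars k ⊓ fpc s.e q) (s.N.restrictScalars k ⊓ fpc s.e (q+1))

theorem St.next (s : St k n) (r : ℕ) (h : s.OK r) : ∃ t : St k n, t.OK (r+1) ∧
    (∀ β, t.e β ≤ r) ∧ ∃ δ : (Fin t.ρ → MvP k n) →ₗ[MvP k n] (Fin s.ρ → MvP k n),
      LinearMap.range δ = s.N ∧ LinearMap.ker δ = t.N ∧ ∀ β, δ (Pi.single β 1) ∈ fpc s.e (t.e β) := by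
  obtain ⟨ρ, e, δ, h1, h2, h3, h4, h5⟩ := res_step (fpc s.e) (fpr s.e) (grM_free s.e) s.N h.1 r h.2
  exact ⟨⟨ρ, e, LinearMap.ker δ⟩, ⟨h4, h5⟩, h3, δ, h1, rfl, h2⟩

theorem regular_of_kos (J : Ideal (MvP k n)) (hJ : ∀ x ∈ J, ∀ q, homogeneousComponent q x ∈ J) (r : ℕ)
    (hK : ∀ q, r ≤ q → Kos (n := n) (pc J q) (pc J (q+1))) : IdealIsRegular J (r : ℤ) := by
  obtain ⟨ρ, e, ε, h1, h2, h3, h4, h5⟩ := res_step (n := n) (M := MvP k n)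
    (homogeneousSubmodule (Fin (n+1)) k) homogeneousComponent grM_S J hJ r hK
  choose nxt hn1 hn2 δ hδ1 hδ2 hδ3 using fun (s : St k n) (r : ℕ) (h : s.OK r) => s.next r h
  let f : ∀ i : ℕ, {s : St k n // s.OK (r + 1 + i)} := fun i =>
    Nat.rec (motive := fun i => {s : St k n // s.OK (r + 1 + i)}) ⟨⟨ρ, e, LinearMap.ker ε⟩, h4, h5⟩
      (fun i s => ⟨nxt s.1 _ s.2, hn1 s.1 _ s.2⟩) i
  refine ⟨fun i => (f i).1.ρ, fun i => (f i).1.e, fun i => δ (f i).1 _ (f i).2, ε, h1, ?_, ?_, h2, ?_, ?_⟩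
  · exact (hδ1 (f 0).1 _ (f 0).2).symm
  · intro i
    rw [hδ1 (f (i+1)).1 _ (f (i+1)).2]
    exact hδ2 (f i).1 _ (f i).2
  · intro i β α
    have := mem_fpc.1 (hδ3 (f i).1 _ (f i).2 β) α
    split_ifs at this with h
    · exact Or.inr ⟨h, this⟩
    · left; simpa using this
  · intro i β
    cases i with
    | zero =>
      have h' : (f 0).1.e β ≤ r := h3 β
      push_cast
      omega
    | succ i =>
      have := hn2 (f i).1 _ (f i).2 β
      have h' : (f (i+1)).1.e β ≤ r + 1 + i := this
      push_cast
      omega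

theorem linear_homog (I : Ideal (MvP k n)) (hI : IsLinearIdeal I) :
    ∀ x ∈ I, ∀ q, homogeneousComponent q x ∈ I := by
  obtain ⟨T, hT, rfl⟩ := hI
  intro x hx q
  have : (Ideal.span T).IsHomogeneous (homogeneousSubmodule (Fin (n+1)) k) :=
    Ideal.homogeneous_span _ _ fun t ht => ⟨1, hT ht⟩
  exact homogeneousComponent_mem_of_mem this hx q

end Res

/-- **Derksen–Sidman.** The defining ideal `I(X) = I_1 ∩ ⋯ ∩ I_d` of an arrangement `X` of
`d` linear subspaces of `ℙⁿ` (each `I_i` generated by linear forms, and not the irrelevant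
ideal, so that it defines a nonempty linear subspace) is `d`-regular. -/
theorem regularity_of_subspace_arrangement {k : Type*} [Field k] {n d : ℕ} (hd : 0 < d)
    (I : Fin d → Ideal (MvP k n))
    (hlin : ∀ i, IsLinearIdeal (I i))
    (hne : ∀ i, I i ≠ Ideal.span (Set.range X)) :
    IdealIsRegular (⨅ i, I i) (d : ℤ) := by
  refine regular_of_kos _ ?_ d (arrangement_kos d I hlin)
  intro x hx q
  rw [Ideal.mem_iInf] at hx ⊢
  exact fun i => linear_homog _ (hlin i) x (hx i) q
end

section
/- Let S = k[x_0,...,x_n] with k an infinite field, let I_1,...,I_d be linear ideals (ideals generated by linear forms) of S, and let L be any linear ideal. Then the ideal I_1 ∩ ... ∩ I_d + L is d-regular. -/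
open MvPolynomial
attribute [local instance] MvPolynomial.gradedAlgebra

section BSaux
variable {k : Type*} [Field k] {n : ℕ}

lemma hc_mul_right {s : ℕ} {b : MvP k n} (hb : b ∈ homogeneousSubmodule (Fin (n+1)) k s)
    (a : MvP k n) (t : ℕ) :
    homogeneousComponent t (a * b) = if s ≤ t then homogeneousComponent (t - s) a * b else 0 := by
  have h := DirectSum.coe_decompose_mul_of_right_mem (homogeneousSubmodule (Fin (n+1)) k)
    (a := a) t hb
  have e : ∀ (p : MvP k n) i,
      (DirectSum.decompose (homogeneousSubmodule (Fin (n+1)) k) p i : MvP k n)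
        = homogeneousComponent i p := fun p i => decomposition.decompose'_apply p i
  simpa only [e] using h

/-- shifted homogeneous component -/
noncomputable def gc (e t : ℕ) (f : MvP k n) : MvP k n :=
  if e ≤ t then homogeneousComponent (t - e) f else 0

/-- homogeneity in a shifted free module -/
def gD {m : ℕ} (e : Fin m → ℕ) (t : ℕ) (f : Fin m → MvP k n) : Prop :=
  ∀ α, f α = 0 ∨ (e α ≤ t ∧ f α ∈ homogeneousSubmodule (Fin (n+1)) k (t - e α))

/-- shifted homogeneous component in a free module -/
noncomputable def gp {m : ℕ} (e : Fin m → ℕ) (t : ℕ) (f : Fin m → MvP k n) : Fin m → MvP k n :=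
  fun α => gc (e α) t (f α)

variable {m : ℕ} {e : Fin m → ℕ}

lemma gp_add (t : ℕ) (f g : Fin m → MvP k n) : gp e t (f + g) = gp e t f + gp e t g := by
  funext α; simp only [gp, gc, Pi.add_apply]; split_ifs <;> simp

lemma gp_zero (t : ℕ) : gp e t (0 : Fin m → MvP k n) = 0 := by
  funext α; simp only [gp, gc, Pi.zero_apply]; split_ifs <;> simp

lemma gp_sum (t : ℕ) {ι : Type*} (s : Finset ι) (f : ι → Fin m → MvP k n) :
    gp e t (∑ i ∈ s, f i) = ∑ i ∈ s, gp e t (f i) := by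
  classical
  induction s using Finset.induction_on with
  | empty => simp [gp_zero]
  | insert a s ha ih => rw [Finset.sum_insert ha, Finset.sum_insert ha, gp_add, ih]

lemma gD_gp (t : ℕ) (f : Fin m → MvP k n) : gD e t (gp e t f) := by
  intro α
  by_cases h : e α ≤ t
  · right; refine ⟨h, ?_⟩; simp only [gp, gc, if_pos h]; exact homogeneousComponent_mem _ _
  · left; simp [gp, gc, h]

lemma gp_of_gD {t : ℕ} {f : Fin m → MvP k n} (h : gD e t f) : gp e t f = f := by
  funext α
  simp only [gp, gc]
  rcases h α with h | ⟨h1, h2⟩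
  · rw [h]; split_ifs <;> simp
  · rw [if_pos h1, homogeneousComponent_of_mem h2, if_pos rfl]

lemma gD_sub {t : ℕ} {f g : Fin m → MvP k n} (hf : gD e t f) (hg : gD e t g) :
    gD e t (f - g) := by
  have : f - g = gp e t (f - g) := by
    have h1 : gp e t (f - g + g) = gp e t (f - g) + gp e t g := gp_add _ _ _
    rw [sub_add_cancel, gp_of_gD hf, gp_of_gD hg] at h1
    rw [sub_eq_iff_eq_add]; exact h1
  rw [this]; exact gD_gp _ _

lemma gp_smul {s : ℕ} {v : Fin m → MvP k n} (hv : gD e s v) (a : MvP k n) (t : ℕ) :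
    gp e t (a • v) = gc s t a • v := by
  funext α
  simp only [gp, gc, Pi.smul_apply, smul_eq_mul]
  rcases hv α with h | ⟨h1, h2⟩
  · rw [h]; split_ifs <;> simp
  · by_cases h3 : e α ≤ t
    · rw [if_pos h3, hc_mul_right h2]
      by_cases h4 : s ≤ t
      · rw [if_pos (by omega), if_pos h4]; congr 3; omega
      · rw [if_neg (by omega), if_neg h4, zero_mul]
    · rw [if_neg h3, if_neg (by omega), zero_mul]

lemma gp_lin_succ {x : MvP k n} (hx : x ∈ homogeneousSubmodule (Fin (n+1)) k 1) (t : ℕ)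
    (f : Fin m → MvP k n) : gp e (t+1) (x • f) = x • gp e t f := by
  funext α
  simp only [gp, gc, Pi.smul_apply, smul_eq_mul]
  rw [mul_comm x (f α), hc_mul_right hx]
  split_ifs with h1 h2 h3 h3
  · rw [mul_comm]; congr 3; omega
  · omega
  · omega
  · simp
  · omega
  · simp

lemma gp_lin_zero {x : MvP k n} (hx : x ∈ homogeneousSubmodule (Fin (n+1)) k 1)
    (f : Fin m → MvP k n) : gp e 0 (x • f) = 0 := by
  funext α
  simp only [gp, gc, Pi.smul_apply, smul_eq_mul]
  rw [mul_comm x (f α), hc_mul_right hx]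
  split_ifs <;> first | rfl | omega

lemma gD_lin {x : MvP k n} (hx : x ∈ homogeneousSubmodule (Fin (n+1)) k 1) {t : ℕ}
    {f : Fin m → MvP k n} (hf : gD e t f) : gD e (t+1) (x • f) := by
  rw [← gp_of_gD hf, ← gp_lin_succ hx]; exact gD_gp _ _

lemma gc_sum (a N : ℕ) (f : MvP k n) (hN : a + f.totalDegree < N) :
    ∑ t ∈ Finset.range N, gc a t f = f := by
  obtain ⟨M, rfl⟩ : ∃ M, N = a + M := ⟨N - a, by omega⟩
  rw [Finset.sum_range_add]
  have h1 : ∑ t ∈ Finset.range a, gc a t f = 0 := by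
    apply Finset.sum_eq_zero
    intro t ht
    rw [Finset.mem_range] at ht
    simp [gc, not_le.2 ht]
  have h2 : ∀ t, gc a (a + t) f = homogeneousComponent t f := by intro t; simp [gc]
  rw [h1, zero_add]
  simp only [h2]
  obtain ⟨M', rfl⟩ : ∃ M', M = (f.totalDegree + 1) + M' := ⟨M - (f.totalDegree + 1), by omega⟩
  rw [Finset.sum_range_add, sum_homogeneousComponent]
  rw [Finset.sum_eq_zero, add_zero]
  intro t _
  exact homogeneousComponent_eq_zero _ _ (by omega)

lemma gp_sum_eq (f : Fin m → MvP k n) : ∃ N, f = ∑ t ∈ Finset.range N, gp e t f := by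
  refine ⟨∑ α, (e α + (f α).totalDegree) + 1, ?_⟩
  funext α
  rw [Finset.sum_apply]
  refine (gc_sum (e α) _ (f α) ?_).symm
  have := Finset.single_le_sum (f := fun α => e α + (f α).totalDegree)
    (fun i _ => Nat.zero_le _) (Finset.mem_univ α)
  change e α + (f α).totalDegree ≤ _ at this
  omega

lemma mem_of_gp {N : Submodule (MvP k n) (Fin m → MvP k n)} {f : Fin m → MvP k n}
    (h : ∀ t, gp e t f ∈ N) : f ∈ N := by
  obtain ⟨K, hK⟩ := gp_sum_eq (e := e) f
  rw [hK]; exact Submodule.sum_mem _ fun t _ => h t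

/-- graded submodule -/
def Gr {m : ℕ} (e : Fin m → ℕ) (M : Submodule (MvP k n) (Fin m → MvP k n)) : Prop :=
  ∀ f ∈ M, ∀ t, gp e t f ∈ M

/-- `x F` -/
noncomputable def xF (m : ℕ) (x : MvP k n) : Submodule (MvP k n) (Fin m → MvP k n) :=
  LinearMap.range (LinearMap.lsmul (MvP k n) (Fin m → MvP k n) x)

lemma mem_xF {x : MvP k n} {f : Fin m → MvP k n} : f ∈ xF m x ↔ ∃ h, x • h = f := by
  simp [xF]

/-- `Y F` -/
noncomputable def YF (m : ℕ) (Y : Ideal (MvP k n)) : Submodule (MvP k n) (Fin m → MvP k n) :=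
  Submodule.pi Set.univ (fun _ => Y)

lemma mem_YF {Y : Ideal (MvP k n)} {f : Fin m → MvP k n} : f ∈ YF m Y ↔ ∀ α, f α ∈ Y := by
  simp [YF, Submodule.mem_pi]

lemma YF_sup (Y : Ideal (MvP k n)) (x : MvP k n) :
    YF m (Y ⊔ Ideal.span {x}) = YF m Y ⊔ xF m x := by
  apply le_antisymm
  · intro f hf
    rw [mem_YF] at hf
    have : ∀ α, ∃ y ∈ Y, ∃ h, y + x * h = f α := by
      intro α
      obtain ⟨y, hy, z, hz, e⟩ := Submodule.mem_sup.1 (hf α)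
      obtain ⟨h, rfl⟩ := Ideal.mem_span_singleton'.1 hz
      exact ⟨y, hy, h, by rw [← e, mul_comm]⟩
    choose y hy h e using this
    rw [Submodule.mem_sup]
    exact ⟨y, mem_YF.2 hy, x • h, mem_xF.2 ⟨h, rfl⟩, funext e⟩
  · rw [sup_le_iff]
    constructor
    · intro f hf
      rw [mem_YF] at *
      exact fun α => Submodule.mem_sup_left (hf α)
    · intro f hf
      obtain ⟨h, rfl⟩ := mem_xF.1 hf
      rw [mem_YF]
      exact fun α => Submodule.mem_sup_right
        (Ideal.mul_mem_right _ _ (Ideal.mem_span_singleton_self x))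

/-- homogeneous elements of `M + xF` decompose. -/
lemma sup_xF_homog {M : Submodule (MvP k n) (Fin m → MvP k n)} (hM : Gr e M) {x : MvP k n}
    (hx : x ∈ homogeneousSubmodule (Fin (n+1)) k 1) {f : Fin m → MvP k n} {t : ℕ}
    (hf : f ∈ M ⊔ xF m x) : ∃ g ∈ M, gD e t g ∧
      ((gp e t f = g) ∨ ∃ s h, t = s + 1 ∧ gD e s h ∧ gp e t f = g + x • h) := by
  obtain ⟨g, hg, z, hz, rfl⟩ := Submodule.mem_sup.1 hf
  obtain ⟨h, rfl⟩ := mem_xF.1 hz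
  refine ⟨gp e t g, hM g hg t, gD_gp _ _, ?_⟩
  rw [gp_add]
  cases t with
  | zero => left; rw [gp_lin_zero hx, add_zero]
  | succ s => right; exact ⟨s, gp e s h, rfl, gD_gp _ _, by rw [gp_lin_succ hx]⟩

lemma Gr_sup_xF {M : Submodule (MvP k n) (Fin m → MvP k n)} (hM : Gr e M) {x : MvP k n}
    (hx : x ∈ homogeneousSubmodule (Fin (n+1)) k 1) : Gr e (M ⊔ xF m x) := by
  intro f hf t
  obtain ⟨g, hg, -, h | ⟨s, h, -, -, h'⟩⟩ := sup_xF_homog (t := t) hM hx hf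
  · rw [h]; exact Submodule.mem_sup_left hg
  · rw [h']
    exact Submodule.add_mem_sup hg (mem_xF.2 ⟨h, rfl⟩)

lemma Gr_sup {M N : Submodule (MvP k n) (Fin m → MvP k n)} (hM : Gr e M) (hN : Gr e N) :
    Gr e (M ⊔ N) := by
  intro f hf t
  obtain ⟨g, hg, h, hh, rfl⟩ := Submodule.mem_sup.1 hf
  rw [gp_add]
  exact Submodule.add_mem_sup (hM g hg t) (hN h hh t)

lemma Gr_span (s : Set (Fin m → MvP k n)) (hs : ∀ f ∈ s, ∃ t, gD e t f) :
    Gr e (Submodule.span (MvP k n) s) := by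
  intro f hf t
  induction hf using Submodule.closure_induction with
  | zero => rw [gp_zero]; exact Submodule.zero_mem _
  | add f g _ _ h1 h2 => rw [gp_add]; exact Submodule.add_mem _ h1 h2
  | smul_mem a f hf =>
    obtain ⟨d, hd⟩ := hs f hf
    rw [gp_smul hd]
    exact Submodule.smul_mem _ _ (Submodule.subset_span hf)

/-- Bayer-Stillman style criterion -/
inductive BS {m : ℕ} (e : Fin m → ℕ) (r : ℕ) :
    Ideal (MvP k n) → Submodule (MvP k n) (Fin m → MvP k n) → Prop
  | base (Y M) : (∀ i, X i ∈ Y) → (∀ t, r ≤ t → ∀ f, gD e t f → f ∈ M) → BS e r Y M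
  | step (Y M) (x : MvP k n) : x ∈ homogeneousSubmodule (Fin (n+1)) k 1 →
      (∀ f, x * f ∈ Y → f ∈ Y) →
      (∀ t, r ≤ t → ∀ f, gD e t f → x • f ∈ M → f ∈ M) →
      BS e r (Y ⊔ Ideal.span {x}) (M ⊔ xF m x) → BS e r Y M

lemma BS_trunc {r : ℕ} {Y : Ideal (MvP k n)} {M : Submodule (MvP k n) (Fin m → MvP k n)}
    (h : BS e r Y M) : ∀ (_ : Gr e M) (M' : Submodule (MvP k n) (Fin m → MvP k n))
    (_ : M' ≤ M) (_ : ∀ t, r ≤ t → ∀ f, gD e t f → f ∈ M → f ∈ M'), BS e r Y M' := by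
  induction h with
  | base Y M h1 h2 =>
    intro hM M' _ h
    exact BS.base _ _ h1 fun t ht f hf => h t ht f hf (h2 t ht f hf)
  | step Y M x hx hY hc _ ih =>
    intro hM M' hle h
    refine BS.step _ _ x hx hY (fun t ht f hf hxf => h t ht f hf (hc t ht f hf (hle hxf))) ?_
    refine ih (Gr_sup_xF hM hx) _ (sup_le_sup_right hle _) ?_
    intro t ht f hf hfM
    obtain ⟨g, hg, hgD, h3 | ⟨s, z, -, -, h3⟩⟩ := sup_xF_homog (t := t) hM hx hfM
    · rw [gp_of_gD hf] at h3
      rw [h3]; exact Submodule.mem_sup_left (h t ht g hgD hg)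
    · rw [gp_of_gD hf] at h3
      rw [h3]; exact Submodule.add_mem_sup (h t ht g hgD hg) (mem_xF.2 ⟨z, rfl⟩)

lemma homog_mem_of_X {Y : Ideal (MvP k n)} (hY : ∀ i, X i ∈ Y) {s : ℕ} (hs : 0 < s)
    {f : MvP k n} (hf : f ∈ homogeneousSubmodule (Fin (n+1)) k s) : f ∈ Y := by
  rw [mem_homogeneousSubmodule] at hf
  rw [f.as_sum]
  refine Ideal.sum_mem _ fun d hd => ?_
  have hd' := hf (mem_support_iff.1 hd)
  have : ∃ i, d i ≠ 0 := by
    by_contra hcon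
    push Not at hcon
    have : d = 0 := Finsupp.ext hcon
    subst this
    simp at hd'
    omega
  obtain ⟨i, hi⟩ := this
  have hdvd : (X i : MvP k n) ∣ monomial d (coeff d f) := by
    rw [X_dvd_monomial]; right; exact hi
  exact Ideal.mem_of_dvd _ hdvd (hY i)

lemma gD_mem_YF {Y : Ideal (MvP k n)} (hY : ∀ i, X i ∈ Y) {r t : ℕ} (he : ∀ α, e α ≤ r)
    (ht : r < t) {f : Fin m → MvP k n} (hf : gD e t f) : f ∈ YF m Y := by
  rw [mem_YF]
  intro α
  rcases hf α with h | ⟨_, h⟩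
  · rw [h]; exact Y.zero_mem
  · exact homog_mem_of_X hY (by have := he α; omega) h

/-- generation in degrees at most `r`. -/
lemma BS_gen {r : ℕ} (he : ∀ α, e α ≤ r) {Y : Ideal (MvP k n)}
    {M : Submodule (MvP k n) (Fin m → MvP k n)}
    (h : BS e r Y M) : ∀ (_ : Gr e M) (_ : Gr e (YF m Y)) (_ : YF m Y ≤ M),
      M ≤ Submodule.span (MvP k n) {f | f ∈ M ∧ ∃ t, t ≤ r ∧ gD e t f} ⊔ YF m Y := by
  induction h with
  | base Y M h1 h2 =>
    intro hM hGY hY f hf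
    refine mem_of_gp (e := e) fun t => ?_
    by_cases ht : t ≤ r
    · exact Submodule.mem_sup_left (Submodule.subset_span ⟨hM f hf t, t, ht, gD_gp _ _⟩)
    · exact Submodule.mem_sup_right (gD_mem_YF h1 he (not_le.1 ht) (gD_gp _ _))
  | step Y M x hx hYx hc _ ih =>
    intro hM hGY hY f hf
    have ih' := ih (Gr_sup_xF hM hx) (by rw [YF_sup]; exact Gr_sup_xF hGY hx)
      (by rw [YF_sup]; exact sup_le_sup_right hY _)
    have key : M ≤ (Submodule.span (MvP k n) {f | f ∈ M ∧ ∃ t, t ≤ r ∧ gD e t f} ⊔ YF m Y)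
        ⊔ xF m x := by
      refine (le_sup_left.trans ih').trans ?_
      rw [YF_sup]
      refine sup_le ?_ (sup_le (le_sup_right.trans le_sup_left) le_sup_right)
      rw [Submodule.span_le]
      rintro g ⟨hg, t, ht, hgt⟩
      obtain ⟨g', hg', hgD, h3 | ⟨s, z, -, -, h3⟩⟩ := sup_xF_homog (t := t) hM hx hg
      · rw [gp_of_gD hgt] at h3
        rw [h3]
        exact Submodule.mem_sup_left (Submodule.mem_sup_left
          (Submodule.subset_span ⟨hg', t, ht, hgD⟩))
      · rw [gp_of_gD hgt] at h3
        rw [h3]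
        exact Submodule.add_mem_sup (Submodule.mem_sup_left
          (Submodule.subset_span ⟨hg', t, ht, hgD⟩)) (mem_xF.2 ⟨z, rfl⟩)
    have hsub : Submodule.span (MvP k n) {f | f ∈ M ∧ ∃ t, t ≤ r ∧ gD e t f} ⊔ YF m Y ≤ M :=
      sup_le (Submodule.span_le.2 fun g hg => hg.1) hY
    have main : ∀ t, ∀ f ∈ M, gD e t f →
        f ∈ Submodule.span (MvP k n) {f | f ∈ M ∧ ∃ t, t ≤ r ∧ gD e t f} ⊔ YF m Y := by
      intro t
      induction t with
      | zero =>
        intro f hf hft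
        exact Submodule.mem_sup_left (Submodule.subset_span ⟨hf, 0, Nat.zero_le _, hft⟩)
      | succ t iht =>
        intro f hf hft
        by_cases ht : t + 1 ≤ r
        · exact Submodule.mem_sup_left (Submodule.subset_span ⟨hf, t+1, ht, hft⟩)
        have hA := Gr_sup (Gr_span {f | f ∈ M ∧ ∃ t, t ≤ r ∧ gD e t f}
          (fun f hf => ⟨hf.2.choose, hf.2.choose_spec.2⟩)) hGY
        obtain ⟨g, hg, hgD, h3 | ⟨s, z, hs, hz, h3⟩⟩ :=
          sup_xF_homog (t := t+1) hA hx (key hf)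
        · rw [gp_of_gD hft] at h3
          rw [h3]; exact hg
        · rw [gp_of_gD hft] at h3
          obtain rfl : t = s := by omega
          have hxz : x • z ∈ M := by
            have : x • z = f - g := by rw [h3]; abel
            rw [this]; exact M.sub_mem hf (hsub hg)
          rw [h3]
          exact Submodule.add_mem _ hg (Submodule.smul_mem _ _
            (iht z (hc t (by omega) z hz hxz) hz))
    exact mem_of_gp (e := e) fun t => main t _ (hM f hf t) (gD_gp _ _)

lemma Gr_comap {m' : ℕ} {e' : Fin m' → ℕ}
    {φ : (Fin m' → MvP k n) →ₗ[MvP k n] (Fin m → MvP k n)}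
    (hφ : ∀ t g, gp e t (φ g) = φ (gp e' t g))
    {N : Submodule (MvP k n) (Fin m → MvP k n)} (hN : Gr e N) : Gr e' (N.comap φ) := by
  intro g hg t
  rw [Submodule.mem_comap, ← hφ]
  exact hN _ hg t

lemma BS_syz {m' : ℕ} {e' : Fin m' → ℕ} {r : ℕ} (he' : ∀ β, e' β ≤ r)
    {φ : (Fin m' → MvP k n) →ₗ[MvP k n] (Fin m → MvP k n)}
    (hφ : ∀ t g, gp e t (φ g) = φ (gp e' t g)) {Y : Ideal (MvP k n)}
    {M : Submodule (MvP k n) (Fin m → MvP k n)}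
    (h : BS e r Y M) : ∀ (_ : Gr e M) (_ : Gr e (YF m Y)) (_ : YF m Y ≤ M)
      (_ : LinearMap.range φ ≤ M)
      (_ : ∀ t, r ≤ t → ∀ f ∈ M, gD e t f → f ∈ LinearMap.range φ ⊔ YF m Y),
      BS e' (r+1) Y ((YF m Y).comap φ) := by
  induction h with
  | base Y M h1 h2 =>
    intro hM hGY hY hr H
    refine BS.base _ _ h1 fun t ht g hg => ?_
    have hg' := mem_YF.1 (gD_mem_YF h1 he' ht hg)
    rw [Submodule.mem_comap]
    have : g = ∑ β, g β • Pi.single β (1 : MvP k n) := by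
      rw [← pi_eq_sum_univ']
    rw [this, map_sum]
    refine Submodule.sum_mem _ fun β _ => ?_
    rw [map_smul, mem_YF]
    exact fun α => Ideal.mul_mem_right _ _ (hg' β)
  | step Y M x hx hYx hc _ ih =>
    intro hM hGY hY hr H
    have ih' := ih (Gr_sup_xF hM hx) (by rw [YF_sup]; exact Gr_sup_xF hGY hx)
      (by rw [YF_sup]; exact sup_le_sup_right hY _) (hr.trans le_sup_left) (by
        intro t ht f hf hft
        rw [YF_sup, ← sup_assoc]
        obtain ⟨g, hg, hgD, h3 | ⟨s, z, -, -, h3⟩⟩ := sup_xF_homog (t := t) hM hx hf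
        · rw [gp_of_gD hft] at h3
          rw [h3]; exact Submodule.mem_sup_left (H t ht g hg hgD)
        · rw [gp_of_gD hft] at h3
          rw [h3]; exact Submodule.add_mem_sup (H t ht g hg hgD) (mem_xF.2 ⟨z, rfl⟩))
    refine BS.step _ _ x hx hYx ?_ ?_
    · intro t ht g hg hxg
      rw [Submodule.mem_comap, map_smul, mem_YF] at hxg
      rw [Submodule.mem_comap, mem_YF]
      exact fun α => hYx _ (hxg α)
    · refine BS_trunc ih' (Gr_comap hφ (by rw [YF_sup]; exact Gr_sup_xF hGY hx)) _ ?_ ?_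
      · rw [YF_sup, sup_le_iff]
        constructor
        · exact Submodule.comap_mono le_sup_left
        · intro g hg
          obtain ⟨h, rfl⟩ := mem_xF.1 hg
          rw [Submodule.mem_comap, map_smul]
          exact Submodule.mem_sup_right (mem_xF.2 ⟨_, rfl⟩)
      · intro t ht g hg hgm
        rw [YF_sup, Submodule.mem_comap] at hgm
        have hgp : gp e t (φ g) = φ g := by rw [hφ, gp_of_gD hg]
        obtain ⟨y, hy, hyD, h3 | ⟨s, z, hs, hz, h3⟩⟩ := sup_xF_homog (t := t) hGY hx hgm
        · rw [hgp] at h3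
          refine Submodule.mem_sup_left ?_
          rw [Submodule.mem_comap, h3]; exact hy
        · rw [hgp] at h3
          have hxz : x • z ∈ M := by
            have : x • z = φ g - y := by rw [h3]; abel
            rw [this]; exact M.sub_mem (hr ⟨g, rfl⟩) (hY hy)
          have hzM := hc s (by omega) z hz hxz
          obtain ⟨_, ⟨g', rfl⟩, y', hy', hz'⟩ := Submodule.mem_sup.1 (H s (by omega) z hzM hz)
          have : g = (g - x • g') + x • g' := by abel
          rw [this]
          refine Submodule.add_mem_sup ?_ (mem_xF.2 ⟨_, rfl⟩)
          rw [Submodule.mem_comap, map_sub, map_smul, h3, ← hz', smul_add]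
          have : y + (x • φ g' + x • y') - x • φ g' = y + x • y' := by abel
          rw [this]
          exact Submodule.add_mem _ hy (Submodule.smul_mem _ _ hy')

lemma YF_bot : YF m (⊥ : Ideal (MvP k n)) = ⊥ := by
  ext f; rw [mem_YF, Submodule.mem_bot, funext_iff]; simp

lemma Gr_bot : Gr e (⊥ : Submodule (MvP k n) (Fin m → MvP k n)) := by
  intro f hf t; rw [Submodule.mem_bot] at *; rw [hf, gp_zero]

lemma next_exists {r : ℕ} (he : ∀ α, e α ≤ r) {M : Submodule (MvP k n) (Fin m → MvP k n)}
    (hM : Gr e M) (h : BS e r ⊥ M) :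
    ∃ (m' : ℕ) (e' : Fin m' → ℕ) (φ : (Fin m' → MvP k n) →ₗ[MvP k n] (Fin m → MvP k n)),
      LinearMap.range φ = M ∧ (∀ β, e' β ≤ r) ∧ (∀ β, gD e (e' β) (φ (Pi.single β 1))) ∧
      Gr e' (LinearMap.ker φ) ∧ BS e' (r+1) ⊥ (LinearMap.ker φ) := by
  have hgen := BS_gen he h hM (by rw [YF_bot]; exact Gr_bot) (by rw [YF_bot]; exact bot_le)
  rw [YF_bot, sup_bot_eq] at hgen
  set s := {f | f ∈ M ∧ ∃ t, t ≤ r ∧ gD e t f} with hs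
  have hspan : Submodule.span (MvP k n) s = M :=
    le_antisymm (Submodule.span_le.2 fun g hg => hg.1) hgen
  have hfg : (Submodule.span (MvP k n) s).FG := IsNoetherian.noetherian _
  obtain ⟨T, hTs, hT⟩ := (Submodule.fg_span_iff_fg_span_finset_subset s).1 hfg
  rw [hspan] at hT
  let v : Fin T.card → Fin m → MvP k n := fun β => (T.equivFin.symm β : Fin m → MvP k n)
  have hv : ∀ β, v β ∈ s := fun β => hTs (T.equivFin.symm β).2
  have hrange : Set.range v = T := by
    ext f; constructor
    · rintro ⟨β, rfl⟩; exact (T.equivFin.symm β).2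
    · intro hf; exact ⟨T.equivFin ⟨f, hf⟩, by simp [v]⟩
  choose e' he' hD using fun β => (hv β).2
  let φ := Fintype.linearCombination (MvP k n) v
  have hφs : ∀ β, φ (Pi.single β 1) = v β := by
    intro β; simp [φ, Fintype.linearCombination_apply_single]
  have hφr : LinearMap.range φ = M := by
    rw [Fintype.range_linearCombination, hrange, hT]
  have hφ : ∀ t g, gp e t (φ g) = φ (gp e' t g) := by
    intro t g
    simp only [φ, Fintype.linearCombination_apply, gp_sum]
    refine Finset.sum_congr rfl fun β _ => ?_
    rw [gp_smul (hD β)]; rfl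
  have hker : (YF m ⊥).comap φ = LinearMap.ker φ := by rw [YF_bot]; rfl
  refine ⟨T.card, e', φ, hφr, he', fun β => by rw [hφs]; exact hD β, ?_, ?_⟩
  · rw [← hker]; exact Gr_comap hφ (by rw [YF_bot]; exact Gr_bot)
  · rw [← hker]
    refine BS_syz he' hφ h hM (by rw [YF_bot]; exact Gr_bot) (by rw [YF_bot]; exact bot_le)
      hφr.le ?_
    intro t _ f hf _
    rw [hφr]; exact Submodule.mem_sup_left hf

/-- state of the resolution -/
structure ResSt (k : Type*) [Field k] (n : ℕ) where
  m : ℕ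
  e : Fin m → ℕ
  r : ℕ
  M : Submodule (MvP k n) (Fin m → MvP k n)
  he : ∀ α, e α ≤ r
  hM : Gr e M
  h : BS e r ⊥ M

lemma ResSt_next (s : ResSt k n) : ∃ (s' : ResSt k n)
    (φ : (Fin s'.m → MvP k n) →ₗ[MvP k n] (Fin s.m → MvP k n)),
    s'.r = s.r + 1 ∧ LinearMap.range φ = s.M ∧ LinearMap.ker φ = s'.M ∧
    (∀ β, s'.e β ≤ s.r) ∧ (∀ β, gD s.e (s'.e β) (φ (Pi.single β 1))) := by
  obtain ⟨m', e', φ, h1, h2, h3, h4, h5⟩ := next_exists s.he s.hM s.h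
  exact ⟨⟨m', e', s.r + 1, LinearMap.ker φ, fun β => (h2 β).trans (Nat.le_succ _), h4, h5⟩, φ,
    rfl, h1, rfl, h2, h3⟩

lemma regular_of_BS (I : Ideal (MvP k n)) (r : ℕ)
    (hG : Gr (fun _ : Fin 1 => 0) (YF 1 I)) (h : BS (fun _ : Fin 1 => 0) r ⊥ (YF 1 I)) :
    IdealIsRegular I (r : ℤ) := by
  choose nx φ hr h1 h2 h3 h4 using ResSt_next (k := k) (n := n)
  let s0 : ResSt k n := ⟨1, fun _ => 0, r, YF 1 I, fun _ => Nat.zero_le _, hG, h⟩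
  let s : ℕ → ResSt k n := fun i => Nat.rec s0 (fun _ a => nx a) i
  have hs : ∀ i, s (i+1) = nx (s i) := fun i => rfl
  have hsr : ∀ i, (s i).r = r + i := by
    intro i
    induction i with
    | zero => rfl
    | succ i ih => rw [hs, hr, ih]; rfl
  refine ⟨fun i => (s (i+1)).m, fun i => (s (i+1)).e, fun i => φ (s (i+1)),
    (LinearMap.proj (0 : Fin 1)).comp (φ s0), ?_, ?_, ?_, ?_, ?_, ?_⟩
  · rw [LinearMap.range_comp, h1]
    ext f
    constructor
    · rintro ⟨g, hg, rfl⟩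
      exact mem_YF.1 hg 0
    · intro hf
      exact ⟨fun _ => f, mem_YF.2 fun _ => hf, rfl⟩
  · have : LinearMap.ker ((LinearMap.proj (0 : Fin 1)).comp (φ s0)) = LinearMap.ker (φ s0) := by
      ext g
      simp only [LinearMap.mem_ker, LinearMap.comp_apply, LinearMap.proj_apply]
      constructor
      · intro hg; funext α
        have : α = (0 : Fin 1) := Subsingleton.elim (α := Fin 1) _ _
        rw [this]; exact hg
      · intro hg; rw [hg]; rfl
    rw [this, h2, h1]; rfl
  · intro i
    rw [h2, h1]
  · intro β
    rcases h4 s0 β 0 with h | ⟨_, h⟩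
    · change φ s0 (Pi.single β 1) 0 ∈ _
      rw [h]; exact Submodule.zero_mem _
    · exact h
  · intro i β α
    exact h4 (s (i+1)) β α
  · intro i β
    have := h3 (s i) β
    rw [hsr] at this
    exact_mod_cast this

/-- elements of large degree killed by powers of linear forms. -/
lemma BS_sat {r : ℕ} {Y : Ideal (MvP k n)} {M : Submodule (MvP k n) (Fin m → MvP k n)}
    (h : BS e r Y M) : ∀ t, r ≤ t → ∀ f, gD e t f →
      (∀ x ∈ homogeneousSubmodule (Fin (n+1)) k 1, ∃ N : ℕ, x ^ N • f ∈ M) → f ∈ M := by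
  induction h with
  | base Y M h1 h2 => intro t ht f hf _; exact h2 t ht f hf
  | step Y M x hx hY hc _ ih =>
    intro t ht f hf hN
    replace hN := hN x hx
    clear ih
    obtain ⟨N, hN⟩ := hN
    induction N generalizing t f with
    | zero => simpa using hN
    | succ N ihN =>
      refine hc t ht f hf (ihN (t+1) (by omega) (x • f) (gD_lin hx hf) ?_)
      rwa [smul_smul, ← pow_succ]

lemma gD_one {t : ℕ} {f : MvP k n} (hf : f ∈ homogeneousSubmodule (Fin (n+1)) k t) :
    gD (fun _ : Fin 1 => 0) t (fun _ => f) := fun _ => Or.inr ⟨Nat.zero_le _, hf⟩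

lemma gD_one_mem {t : ℕ} {f : Fin 1 → MvP k n} (hf : gD (fun _ : Fin 1 => 0) t f) :
    f 0 ∈ homogeneousSubmodule (Fin (n+1)) k t := by
  rcases hf 0 with h | ⟨_, h⟩
  · rw [h]; exact Submodule.zero_mem _
  · exact h

lemma Gr_YF {I : Ideal (MvP k n)} (hI : I.IsHomogeneous (homogeneousSubmodule (Fin (n+1)) k)) :
    Gr (fun _ : Fin 1 => 0) (YF 1 I) := by
  intro f hf t
  rw [mem_YF] at *
  intro α
  have := hI t (hf α)
  have e : (DirectSum.decompose (homogeneousSubmodule (Fin (n+1)) k) (f α) t : MvP k n)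
        = homogeneousComponent t (f α) := decomposition.decompose'_apply (f α) t
  rw [e] at this
  simpa [gp, gc] using this

lemma lin_homog_s1 {I : Ideal (MvP k n)} (hI : IsLinearIdeal I) :
    I.IsHomogeneous (homogeneousSubmodule (Fin (n+1)) k) := by
  obtain ⟨T, hT, rfl⟩ := hI
  exact Ideal.homogeneous_span _ _ fun x hx => ⟨1, hT hx⟩

lemma lin_sup {I J : Ideal (MvP k n)} (hI : IsLinearIdeal I) (hJ : IsLinearIdeal J) :
    IsLinearIdeal (I ⊔ J) := by
  obtain ⟨T, hT, rfl⟩ := hI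
  obtain ⟨U, hU, rfl⟩ := hJ
  exact ⟨T ∪ U, Set.union_subset hT hU, (Ideal.span_union _ _).symm⟩

lemma lin_single_s1 {x : MvP k n} (hx : x ∈ homogeneousSubmodule (Fin (n+1)) k 1) :
    IsLinearIdeal (Ideal.span {x}) := ⟨{x}, by simpa using hx, rfl⟩

lemma lin_bot : IsLinearIdeal (⊥ : Ideal (MvP k n)) := ⟨∅, by simp, by simp⟩

lemma nzd_of_notMem {d : ℕ} (I : Fin d → Ideal (MvP k n)) (L W : Ideal (MvP k n))
    (hI : ∀ i, IsLinearIdeal (I i)) (hL : IsLinearIdeal L) (hIW : ∀ i, I i ≤ W) (hLW : L ≤ W)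
    {x : MvP k n} (hx : x ∈ homogeneousSubmodule (Fin (n+1)) k 1) (hxW : x ∉ W)
    (f : MvP k n) (hf : x * f ∈ (⨅ i, I i) ⊔ L) : f ∈ (⨅ i, I i) ⊔ L := by
  obtain ⟨l0, hl0, hker⟩ := Submodule.exists_le_ker_of_notMem
    (p := W.restrictScalars k) (v := x) hxW
  let l : MvP k n →ₗ[k] k := (l0 x)⁻¹ • l0
  have hlx : l x = 1 := by simp [l, hl0]
  have hlW : ∀ w ∈ W, l w = 0 := by
    intro w hw
    have : l0 w = 0 := hker hw
    simp [l, this]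
  let ψ : MvP k n →ₐ[k] Polynomial (MvP k n) :=
    aeval fun i => Polynomial.C (X i - C (l (X i)) * x) + Polynomial.C (C (l (X i))) * Polynomial.X
  have hψ : ∀ v ∈ homogeneousSubmodule (Fin (n+1)) k 1,
      ψ v = Polynomial.C (v - C (l v) * x) + Polynomial.C (C (l v)) * Polynomial.X := by
    intro v hv
    rw [homogeneousSubmodule_one_eq_span_X] at hv
    induction hv using Submodule.span_induction with
    | mem v hv => obtain ⟨i, rfl⟩ := hv; simp [ψ]
    | zero => simp
    | add v w _ _ h1 h2 => rw [map_add, h1, h2]; simp only [map_add, map_sub, map_mul]; ring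
    | smul a v _ h =>
      rw [map_smul, h, map_smul l]
      simp only [smul_eq_mul, map_sub, map_mul, Algebra.smul_def, Polynomial.algebraMap_apply, MvPolynomial.algebraMap_eq]
      ring
  have hψx : ψ x = Polynomial.X := by rw [hψ x hx, hlx]; simp
  have hret : ∀ g, (ψ g).eval x = g := by
    intro g
    have : ((Polynomial.aeval x : Polynomial (MvP k n) →ₐ[MvP k n] MvP k n).restrictScalars k).comp ψ
        = AlgHom.id k _ := by
      apply MvPolynomial.algHom_ext
      intro i
      simp [ψ]
    have := DFunLike.congr_fun this g
    simpa [Polynomial.aeval_def, Polynomial.eval₂_id, Polynomial.coe_aeval_eq_eval] using this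
  have hmap : ∀ J : Ideal (MvP k n), IsLinearIdeal J → J ≤ W →
      ∀ g ∈ J, ψ g ∈ Ideal.map Polynomial.C J := by
    rintro J ⟨T, hT, rfl⟩ hJ g hg
    have : Ideal.span T ≤ (Ideal.map Polynomial.C (Ideal.span T)).comap ψ := by
      rw [Ideal.span_le]
      intro w hw
      have h1 := hψ w (hT hw)
      rw [hlW w (hJ (Ideal.subset_span hw))] at h1
      rw [SetLike.mem_coe, Ideal.mem_comap]
      rw [h1]
      simpa using Ideal.mem_map_of_mem Polynomial.C (Ideal.subset_span hw)
    exact this hg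
  have hmapI : ∀ g ∈ (⨅ i, I i) ⊔ L, ψ g ∈ Ideal.map Polynomial.C ((⨅ i, I i) ⊔ L) := by
    intro g hg
    obtain ⟨a, ha, b, hb, rfl⟩ := Submodule.mem_sup.1 hg
    rw [map_add, Ideal.map_sup]
    refine Submodule.add_mem_sup ?_ (hmap L hL hLW b hb)
    rw [Ideal.mem_map_C_iff]
    intro j
    rw [Ideal.mem_iInf] at *
    intro i
    exact Ideal.mem_map_C_iff.1 (hmap (I i) (hI i) (hIW i) a (ha i)) j
  have h1 := hmapI _ hf
  rw [map_mul, hψx, Ideal.mem_map_C_iff] at h1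
  rw [← hret f, Polynomial.eval_eq_sum, Polynomial.sum]
  refine Ideal.sum_mem _ fun j _ => Ideal.mul_mem_right _ _ ?_
  have := h1 (j+1)
  rwa [Polynomial.coeff_X_mul] at this

lemma nzd_Y (Y : Ideal (MvP k n)) (hY : IsLinearIdeal Y)
    {x : MvP k n} (hx : x ∈ homogeneousSubmodule (Fin (n+1)) k 1) (hxY : x ∉ Y)
    (f : MvP k n) (hf : x * f ∈ Y) : f ∈ Y := by
  have := nzd_of_notMem (fun _ : Fin 1 => Y) Y Y (fun _ => hY) hY (fun _ => le_rfl) le_rfl hx hxY f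
  simp only [ciInf_const, sup_idem] at this
  exact this hf

lemma avoid [Infinite k] (s : Set (Ideal (MvP k n))) (hs : s.Finite)
    (h : ∀ P ∈ s, ∃ i, X i ∉ P) :
    ∃ x ∈ homogeneousSubmodule (Fin (n+1)) k 1, ∀ P ∈ s, x ∉ P := by
  classical
  let V := homogeneousSubmodule (Fin (n+1)) k 1
  let p : Ideal (MvP k n) → Subspace k V := fun P => (P.restrictScalars k).comap V.subtype
  have := Subspace.biUnion_ne_univ_of_top_notMem (k := k) (E := V)
    (s := hs.toFinset.image p) (by
      rw [Finset.mem_image]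
      rintro ⟨P, hP, hp⟩
      obtain ⟨i, hi⟩ := h P (hs.mem_toFinset.1 hP)
      have hX : (X i : MvP k n) ∈ V := isHomogeneous_X k i
      have : (⟨X i, hX⟩ : V) ∈ p P := by rw [hp]; trivial
      exact hi this)
  rw [Set.ne_univ_iff_exists_notMem] at this
  obtain ⟨x, hx⟩ := this
  refine ⟨x, x.2, fun P hP hxP => hx ?_⟩
  simp only [Set.mem_iUnion]
  exact ⟨p P, Finset.mem_image_of_mem _ (hs.mem_toFinset.2 hP), hxP⟩

/-- the saturation -/
lemma sat_exists (I : Ideal (MvP k n)) : ∃ I' : Ideal (MvP k n), I ≤ I' ∧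
    (∀ f, (∀ i, X i * f ∈ I') → f ∈ I') ∧
    (∀ f ∈ I', ∃ N : ℕ, ∀ x ∈ homogeneousSubmodule (Fin (n+1)) k 1, x ^ N * f ∈ I) := by
  let m : Ideal (MvP k n) := Ideal.span (Set.range X)
  let c : ℕ →o Ideal (MvP k n) := ⟨fun N =>
    { carrier := {f | ∀ g ∈ m ^ N, g * f ∈ I}
      add_mem' := fun ha hb g hg => by rw [mul_add]; exact I.add_mem (ha g hg) (hb g hg)
      zero_mem' := fun g _ => by simp
      smul_mem' := fun a f hf g hg => by
        rw [smul_eq_mul, mul_left_comm]; exact I.mul_mem_left _ (hf g hg) },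
    monotone_nat_of_le_succ fun N f hf g hg => hf g (Ideal.pow_le_pow_right (Nat.le_succ N) hg)⟩
  obtain ⟨N, hN⟩ := monotone_stabilizes_iff_noetherian.2
    (inferInstance : IsNoetherian (MvP k n) (MvP k n)) c
  refine ⟨c N, fun f hf g _ => I.mul_mem_left _ hf, fun f hf => ?_, fun f hf => ⟨N, fun x hx => ?_⟩⟩
  · rw [hN (N+1) (Nat.le_succ N)]
    intro g hg
    rw [pow_succ] at hg
    refine Submodule.mul_induction_on hg ?_ ?_
    · intro a ha b hb
      have : m ≤ Submodule.comap (LinearMap.mulRight (MvP k n) f) (c N) := by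
        rw [Ideal.span_le]
        rintro _ ⟨i, rfl⟩
        exact hf i
      have h2 : b * f ∈ c N := this hb
      rw [mul_assoc]
      exact h2 a ha
    · intro a b ha hb; rw [add_mul]; exact I.add_mem ha hb
  · refine hf _ (Ideal.pow_mem_pow ?_ N)
    exact homog_mem_of_X (Y := m) (fun i => Ideal.subset_span (Set.mem_range_self i)) Nat.one_pos hx

lemma generic_exists [Infinite k] (I' Z : Ideal (MvP k n)) (hZ : ∃ i, X i ∉ Z)
    (hI' : ∀ f, (∀ i, X i * f ∈ I') → f ∈ I') :
    ∃ x ∈ homogeneousSubmodule (Fin (n+1)) k 1, x ∉ Z ∧ ∀ f, x * f ∈ I' → f ∈ I' := by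
  obtain ⟨x, hx, hxs⟩ := avoid (insert Z (associatedPrimes (MvP k n) (MvP k n ⧸ I')))
    ((associatedPrimes.finite _ _).insert _) (by
      intro P hP
      rcases hP with rfl | hP
      · exact hZ
      · by_contra hcon
        push Not at hcon
        obtain ⟨hpr, f, hf⟩ := (isAssociatedPrime_iff).1 hP
        obtain ⟨f, rfl⟩ := Ideal.Quotient.mk_surjective f
        have hmem : ∀ a, a ∈ P ↔ a * f ∈ I' := by
          intro a
          rw [hf, Submodule.mem_colon_singleton, Submodule.mem_bot, ← Ideal.Quotient.eq_zero_iff_mem,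
            map_mul]
          rfl
        have : f ∈ I' := hI' f fun i => (hmem _).1 (hcon i)
        exact hpr.ne_top ((Ideal.eq_top_iff_one P).2 ((hmem 1).2 (by rwa [one_mul]))))
  refine ⟨x, hx, hxs Z (Set.mem_insert _ _), fun f hf => ?_⟩
  by_contra hfI
  have h := biUnion_associatedPrimes_eq_zero_divisors (MvP k n) (MvP k n ⧸ I')
  have hmem : x ∈ ⋃ p ∈ associatedPrimes (MvP k n) (MvP k n ⧸ I'), (p : Set (MvP k n)) := by
    rw [h]
    refine ⟨Ideal.Quotient.mk I' f, by rwa [Ne, Ideal.Quotient.eq_zero_iff_mem], ?_⟩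
    have : x • Ideal.Quotient.mk I' f = Ideal.Quotient.mk I' (x * f) := by rw [map_mul]; rfl
    rw [this]; exact Ideal.Quotient.eq_zero_iff_mem.2 hf
  simp only [Set.mem_iUnion] at hmem
  obtain ⟨P, hP, hxP⟩ := hmem
  exact hxs P (Set.mem_insert_of_mem _ hP) hxP

/-- ideal version of the inductive step -/
lemma BS_step_ideal {r : ℕ} {Y I : Ideal (MvP k n)} {x : MvP k n}
    (hx : x ∈ homogeneousSubmodule (Fin (n+1)) k 1) (hY : ∀ f, x * f ∈ Y → f ∈ Y)
    (hc : ∀ t, r ≤ t → ∀ f ∈ homogeneousSubmodule (Fin (n+1)) k t, x * f ∈ I → f ∈ I)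
    (h : BS (fun _ : Fin 1 => 0) r (Y ⊔ Ideal.span {x}) (YF 1 (I ⊔ Ideal.span {x}))) :
    BS (fun _ : Fin 1 => 0) r Y (YF 1 I) := by
  refine BS.step _ _ x hx hY ?_ (by rwa [← YF_sup])
  intro t ht f hf hxf
  rw [mem_YF] at *
  intro α
  rw [Subsingleton.elim α 0]
  exact hc t ht _ (gD_one_mem hf) (hxf 0)

lemma BS_sat_ideal {r : ℕ} {Y I : Ideal (MvP k n)} (h : BS (fun _ : Fin 1 => 0) r Y (YF 1 I))
    {t : ℕ} (ht : r ≤ t) {f : MvP k n} (hf : f ∈ homogeneousSubmodule (Fin (n+1)) k t)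
    (hN : ∃ N : ℕ, ∀ x ∈ homogeneousSubmodule (Fin (n+1)) k 1, x ^ N * f ∈ I) : f ∈ I := by
  obtain ⟨N, hN⟩ := hN
  exact mem_YF.1 (BS_sat h t ht (fun _ => f) (gD_one hf) fun x hx =>
    ⟨N, mem_YF.2 fun _ => hN x hx⟩) 0

lemma BS_main [Infinite k] (d : ℕ) : ∀ (I : Fin d → Ideal (MvP k n))
    (_ : ∀ i, IsLinearIdeal (I i)) (Y L : Ideal (MvP k n)) (_ : IsLinearIdeal Y)
    (_ : IsLinearIdeal L) (_ : Y ≤ L),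
    BS (fun _ : Fin 1 => 0) d Y (YF 1 ((⨅ i, I i) ⊔ L)) := by
  induction d with
  | zero =>
    intro I hI Y
    induction Y using WellFoundedGT.induction with
    | ind Y ihY =>
    intro L hY hL hYL
    have htop : (⨅ i, I i) ⊔ L = ⊤ := by simp
    by_cases hm : ∀ i, X i ∈ Y
    · exact BS.base _ _ hm fun t _ f _ => mem_YF.2 fun α => by rw [htop]; trivial
    push Not at hm
    obtain ⟨i, hi⟩ := hm
    have hX : (X i : MvP k n) ∈ homogeneousSubmodule (Fin (n+1)) k 1 := isHomogeneous_X k i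
    refine BS_step_ideal hX (nzd_Y Y hY hX hi) (fun t _ f _ _ => by rw [htop]; trivial) ?_
    rw [sup_assoc]
    refine ihY _ ?_ _ (lin_sup hY (lin_single_s1 hX)) (lin_sup hL (lin_single_s1 hX))
      (sup_le_sup_right hYL _)
    refine lt_of_le_of_ne le_sup_left fun h => hi ?_
    rw [h]; exact Submodule.mem_sup_right (Ideal.mem_span_singleton_self _)
  | succ d ihd =>
    intro I hI Y
    induction Y using WellFoundedGT.induction with
    | ind Y ihY =>
    intro L hY hL hYL
    by_cases hm : ∀ i, X i ∈ Y
    · refine BS.base _ _ hm fun t ht f hf => mem_YF.2 fun α => ?_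
      rw [Subsingleton.elim α 0]
      exact Submodule.mem_sup_right (hYL (homog_mem_of_X hm (by omega) (gD_one_mem hf)))
    push Not at hm
    have next : ∀ x ∈ homogeneousSubmodule (Fin (n+1)) k 1, x ∉ Y →
        BS (fun _ : Fin 1 => 0) (d+1) (Y ⊔ Ideal.span {x})
          (YF 1 ((⨅ i, I i) ⊔ L ⊔ Ideal.span {x})) := by
      intro x hx hxY
      rw [sup_assoc]
      refine ihY _ ?_ _ (lin_sup hY (lin_single_s1 hx)) (lin_sup hL (lin_single_s1 hx))
        (sup_le_sup_right hYL _)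
      refine lt_of_le_of_ne le_sup_left fun h => hxY ?_
      rw [h]; exact Submodule.mem_sup_right (Ideal.mem_span_singleton_self _)
    let W : Ideal (MvP k n) := (⨆ i, I i) ⊔ L
    have hIW : ∀ i, I i ≤ W := fun i => (le_iSup I i).trans le_sup_left
    by_cases hW : ∀ i, X i ∈ W
    swap
    · push Not at hW
      obtain ⟨x, hx, hxs⟩ := avoid {Y, W} (Set.toFinite _) (by
        rintro P (rfl | rfl)
        · exact hm
        · exact hW)
      exact BS_step_ideal hx (nzd_Y Y hY hx (hxs Y (by simp)))
        (fun t _ f _ hf => nzd_of_notMem I L W hI hL hIW le_sup_right hx (hxs W (by simp)) f hf)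
        (next x hx (hxs Y (by simp)))
    obtain ⟨I', hII', hI'm, hI's⟩ := sat_exists ((⨅ i, I i) ⊔ L)
    obtain ⟨x, hx, hxY, hxI'⟩ := generic_exists I' Y hm hI'm
    have hnext := next x hx hxY
    -- elements of the saturation in degree at least `d` are killed by linear forms
    have kill : ∀ t, d ≤ t → ∀ f ∈ homogeneousSubmodule (Fin (n+1)) k t, f ∈ I' →
        ∀ z ∈ W, z * f ∈ (⨅ i, I i) ⊔ L := by
      intro t ht f hf hfI'
      have hJ : ∀ a : Fin (d+1), f ∈ (⨅ i, I (a.succAbove i)) ⊔ L := by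
        intro a
        refine BS_sat_ideal (ihd (fun i => I (a.succAbove i)) (fun i => hI _) ⊥ L lin_bot hL bot_le)
          ht hf ?_
        obtain ⟨N, hN⟩ := hI's f hfI'
        refine ⟨N, fun x hx => ?_⟩
        exact sup_le_sup_right (le_iInf fun i => iInf_le I (a.succAbove i)) _ (hN x hx)
      have hle : W ≤ Submodule.comap (LinearMap.mulRight (MvP k n) f) ((⨅ i, I i) ⊔ L) := by
        refine sup_le (iSup_le fun a => ?_) ?_
        · intro z hz
          change z * f ∈ (⨅ i, I i) ⊔ L
          obtain ⟨g, hg, l, hl, rfl⟩ := Submodule.mem_sup.1 (hJ a)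
          rw [mul_add]
          refine Submodule.add_mem_sup ?_ (L.mul_mem_left _ hl)
          rw [Ideal.mem_iInf] at *
          intro i
          rcases Fin.eq_self_or_eq_succAbove a i with rfl | ⟨j, rfl⟩
          · exact Ideal.mul_mem_right _ _ hz
          · exact Ideal.mul_mem_left _ _ (hg j)
        · intro z hz
          exact Submodule.mem_sup_right (L.mul_mem_right _ hz)
      exact fun z hz => hle hz
    have hG : Gr (fun _ : Fin 1 => 0) (YF 1 ((⨅ i, I i) ⊔ L)) :=
      Gr_YF (Ideal.IsHomogeneous.sup (Ideal.IsHomogeneous.iInf fun i => lin_homog_s1 (hI i))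
        (lin_homog_s1 hL))
    refine BS_step_ideal hx (nzd_Y Y hY hx hxY) ?_ hnext
    intro t ht f hf hxf
    have hfI' : f ∈ I' := hxI' f (hII' hxf)
    have hfx : f ∈ (⨅ i, I i) ⊔ L ⊔ Ideal.span {x} := by
      refine BS_sat_ideal hnext ht hf ?_
      obtain ⟨N, hN⟩ := hI's f hfI'
      exact ⟨N, fun y hy => Submodule.mem_sup_left (hN y hy)⟩
    have hfx' : (fun _ => f : Fin 1 → MvP k n) ∈ YF 1 ((⨅ i, I i) ⊔ L) ⊔ xF 1 x := by
      rw [← YF_sup]; exact mem_YF.2 fun _ => hfx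
    obtain ⟨g, hg, hgD, h3 | ⟨s, z, hs, hz, h3⟩⟩ := sup_xF_homog (t := t) hG hx hfx'
    · rw [gp_of_gD (gD_one hf)] at h3
      have := mem_YF.1 hg 0
      rwa [← h3] at this
    · rw [gp_of_gD (gD_one hf)] at h3
      have h4 : f = g 0 + x * z 0 := congrFun h3 0
      have hg0 := mem_YF.1 hg 0
      have hz' : z 0 ∈ I' := by
        apply hxI'
        have : x * z 0 = f - g 0 := by rw [h4]; ring
        rw [this]; exact I'.sub_mem hfI' (hII' hg0)
      rw [h4]
      exact Ideal.add_mem _ hg0 (kill s (by omega) _ (gD_one_mem hz) hz' x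
        (homog_mem_of_X hW Nat.one_pos hx))

end BSaux

/-- For linear ideals `I_1, …, I_d` and any linear ideal `L` over an infinite field,
`I_1 ∩ ⋯ ∩ I_d + L` is `d`-regular. -/
theorem regularity_of_intersection_plus_linear {k : Type*} [Field k] [Infinite k]
    {n d : ℕ} (hd : 0 < d) (I : Fin d → Ideal (MvP k n)) (L : Ideal (MvP k n))
    (hlin : ∀ i, IsLinearIdeal (I i)) (hL : IsLinearIdeal L) :
    IdealIsRegular ((⨅ i, I i) + L) (d : ℤ) := by
  exact regular_of_BS _ d
    (Gr_YF (Ideal.IsHomogeneous.sup (Ideal.IsHomogeneous.iInf fun i => lin_homog_s1 (hlin i))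
      (lin_homog_s1 hL)))
    (BS_main d I hlin ⊥ L lin_bot hL bot_le)
end

section
/- Let I_1 and I_2 be linear ideals in S = k[x_0,...,x_n]. Then the intersection I_1 ∩ I_2 is 2-regular. -/
open MvPolynomial
attribute [local instance] MvPolynomial.gradedAlgebra

section Helpers

variable {k : Type*} [Field k] {n : ℕ}

/-- The ideal generated by a space of polynomials. -/
noncomputable abbrev idl (U : Submodule k (MvP k n)) : Ideal (MvP k n) :=
  Ideal.span (U : Set (MvP k n))

theorem idl_sup (U V : Submodule k (MvP k n)) : idl (U ⊔ V) = idl U ⊔ idl V := by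
  apply le_antisymm
  · rw [Ideal.span_le]
    intro x hx
    obtain ⟨a, ha, b, hb, rfl⟩ := Submodule.mem_sup.1 hx
    exact Ideal.add_mem _ (Ideal.mem_sup_left (Ideal.subset_span ha))
      (Ideal.mem_sup_right (Ideal.subset_span hb))
  · exact sup_le (Ideal.span_mono (fun x hx => Submodule.mem_sup_left hx))
      (Ideal.span_mono (fun x hx => Submodule.mem_sup_right hx))

theorem idl_span (T : Set (MvP k n)) : idl (Submodule.span k T) = Ideal.span T :=
  Submodule.span_span_of_tower k (MvP k n) T

theorem idl_mono {U V : Submodule k (MvP k n)} (h : U ≤ V) : idl U ≤ idl V :=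
  Ideal.span_mono h

theorem idl_bot : idl (⊥ : Submodule k (MvP k n)) = ⊥ := by
  simp [idl]

theorem linear_colon (U : Submodule k (MvP k n))
    (hU : U ≤ homogeneousSubmodule (Fin (n+1)) k 1) {l f : MvP k n}
    (hl : l ∈ homogeneousSubmodule (Fin (n+1)) k 1) (hlU : l ∉ U) (h : f * l ∈ idl U) :
    f ∈ idl U := by
  obtain ⟨p, hp⟩ := LinearMap.exists_leftInverse_of_injective U.subtype (by simp)
  have hp' : ∀ u (hu : u ∈ U), p u = ⟨u, hu⟩ := fun u hu => by
    simpa using LinearMap.congr_fun hp ⟨u, hu⟩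
  let π : MvP k n →ₗ[k] MvP k n := LinearMap.id - U.subtype ∘ₗ p
  let φ : MvP k n →ₐ[k] MvP k n := aeval (fun i => π (X i))
  have h1 : ∀ g ∈ homogeneousSubmodule (Fin (n+1)) k 1, φ g = π g := by
    intro g hg
    rw [homogeneousSubmodule_one_eq_span_X] at hg
    induction hg using Submodule.span_induction with
    | mem x hx => obtain ⟨i, rfl⟩ := hx; simp [φ]
    | zero => simp
    | add x y _ _ hx hy => simp [hx, hy]
    | smul c x _ hx => simp [hx]
  have h2 : ∀ g, Ideal.Quotient.mkₐ k (idl U) (φ g) = Ideal.Quotient.mkₐ k (idl U) g := by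
    have : (Ideal.Quotient.mkₐ k (idl U)).comp φ = Ideal.Quotient.mkₐ k (idl U) := by
      apply MvPolynomial.algHom_ext
      intro i
      simp only [AlgHom.comp_apply, Ideal.Quotient.mkₐ_eq_mk]
      rw [Ideal.Quotient.eq]
      have : φ (X i) - X i = -(p (X i) : MvP k n) := by simp [φ, π]
      rw [this]
      exact Ideal.neg_mem_iff _ |>.2 (Ideal.subset_span (p (X i)).2)
    exact fun g => DFunLike.congr_fun this g
  have h3 : idl U ≤ RingHom.ker φ.toRingHom := by
    rw [Ideal.span_le]
    intro u hu
    change φ u = 0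
    rw [h1 u (hU hu)]
    simp [π, hp' u hu]
  have h4 : φ f * φ l = 0 := by
    have := h3 h
    rw [← map_mul]; exact this
  rw [h1 l hl] at h4
  have h5 : π l ≠ 0 := by
    intro h0
    apply hlU
    have : l = (p l : MvP k n) := by
      have : l - (p l : MvP k n) = 0 := h0
      exact sub_eq_zero.1 this
    rw [this]; exact (p l).2
  have h6 : φ f = 0 := (mul_eq_zero.1 h4).resolve_right h5
  have h7 := h2 f
  rw [h6, map_zero] at h7
  exact Ideal.Quotient.eq_zero_iff_mem.1 h7.symm

/-- Submodules with a finite chain of linear quotients, generated in degrees at most `r`. -/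
inductive LinQ {M : Type*} [AddCommGroup M] [Module (MvP k n) M] (H : ℕ → Set M) (r : ℕ) :
    Submodule (MvP k n) M → Prop
  | zero : LinQ H r ⊥
  | step (N : Submodule (MvP k n) M) (x : M) (d : ℕ) (U : Submodule k (MvP k n))
      (hN : LinQ H r N) (hd : d ≤ r) (hx : x ∈ H d)
      (hU : U ≤ homogeneousSubmodule (Fin (n+1)) k 1)
      (hc : ∀ f : MvP k n, f • x ∈ N ↔ f ∈ idl U) : LinQ H r (N ⊔ Submodule.span (MvP k n) {x})

theorem LinQ.map {M M' : Type*} [AddCommGroup M] [Module (MvP k n) M]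
    [AddCommGroup M'] [Module (MvP k n) M'] {H : ℕ → Set M} {H' : ℕ → Set M'} {r r' : ℕ}
    (hr : r ≤ r')
    (g : M →ₗ[MvP k n] M') (hg : Function.Injective g) (hH : ∀ d x, x ∈ H d → g x ∈ H' d)
    {N : Submodule (MvP k n) M} (h : LinQ H r N) : LinQ H' r' (N.map g) := by
  induction h with
  | zero => rw [Submodule.map_bot]; exact LinQ.zero
  | step N x d U hN hd hx hU hc ih =>
    rw [Submodule.map_sup, Submodule.map_span, Set.image_singleton]
    refine LinQ.step _ _ d U ih (hd.trans hr) (hH _ _ hx) hU ?_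
    intro f
    rw [← map_smul, ← hc f]
    constructor
    · rintro ⟨y, hy, hyx⟩
      rw [← hg hyx]; exact hy
    · exact fun h => ⟨_, h, rfl⟩

/-- Homogeneous vectors in a graded free module. -/
def HomV {ρ : ℕ} (e : Fin ρ → ℕ) (d : ℕ) : Set (Fin ρ → MvP k n) :=
  {w | ∀ α, w α = 0 ∨ (e α ≤ d ∧ w α ∈ homogeneousSubmodule (Fin (n+1)) k (d - e α))}

/-- Existence of degree projections. -/
def HasP {M : Type*} [AddCommGroup M] [Module (MvP k n) M] (H : ℕ → Set M) : Prop :=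
  ∃ p : ℕ → M →+ M, ∀ (d d' : ℕ) (f : MvP k n) (x : M), x ∈ H d' →
    p d (f • x) = (if d' ≤ d then homogeneousComponent (d - d') f else 0) • x

theorem comp_mul (f x : MvP k n) (d d' : ℕ) (hx : x ∈ homogeneousSubmodule (Fin (n+1)) k d') :
    homogeneousComponent d (f * x) =
      (if d' ≤ d then homogeneousComponent (d - d') f else 0) * x := by
  have := DirectSum.coe_decompose_mul_of_right_mem (𝒜 := homogeneousSubmodule (Fin (n+1)) k)
    (a := f) d hx
  have key : ∀ (g : MvP k n) i, (DirectSum.decompose (homogeneousSubmodule (Fin (n+1)) k) g i : MvP k n)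
      = homogeneousComponent i g := fun g i => decomposition.decompose'_apply g i
  rw [key] at this
  rw [this]
  split_ifs
  · rw [key]
  · simp

theorem hasP_ring : HasP (k := k) (n := n) (M := MvP k n)
    (fun d => (homogeneousSubmodule (Fin (n+1)) k d : Set (MvP k n))) :=
  ⟨fun d => (homogeneousComponent d).toAddMonoidHom, fun d d' f x hx => comp_mul f x d d' hx⟩

theorem hasP_homV {ρ : ℕ} (e : Fin ρ → ℕ) : HasP (k := k) (n := n) (HomV (k := k) (n := n) e) := by
  refine ⟨fun d => 
    { toFun := fun w α => if e α ≤ d then homogeneousComponent (d - e α) (w α) else 0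
      map_zero' := ?_
      map_add' := ?_ }, ?_⟩
  · ext1 α; simp
  · intro v w; ext1 α
    simp only [Pi.add_apply, map_add]
    split_ifs <;> simp
  · intro d d' f x hx
    ext1 α
    simp only [AddMonoidHom.coe_mk, ZeroHom.coe_mk, Pi.smul_apply, smul_eq_mul]
    rcases hx α with h | ⟨h, h'⟩
    · simp [h]
    · rw [comp_mul f _ _ _ h']
      by_cases h1 : d' ≤ d
      · rw [if_pos (h.trans h1), if_pos (by omega), if_pos h1]
        congr 3; omega
      · rw [if_neg h1]
        by_cases h2 : e α ≤ d
        · rw [if_pos h2, if_neg (by omega)]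
        · rw [if_neg h2]; simp

/-- Extension by zero. -/
noncomputable def consZ (m : ℕ) : (Fin m → MvP k n) →ₗ[MvP k n] (Fin (m+1) → MvP k n) where
  toFun w := Fin.cons 0 w
  map_add' v w := by
    ext1 i; refine Fin.cases ?_ (fun i => ?_) i <;> simp
  map_smul' c w := by
    ext1 i; refine Fin.cases ?_ (fun i => ?_) i <;> simp

set_option maxHeartbeats 400000 in
theorem syzygy {M : Type*} [AddCommGroup M] [Module (MvP k n) M] (H : ℕ → Set M) (hP : HasP (k := k) (n := n) H)
    (r : ℕ) (N : Submodule (MvP k n) M) (h : LinQ H r N) :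
    ∃ (m : ℕ) (e : Fin m → ℕ) (v : Fin m → M), (∀ j, e j ≤ r) ∧ (∀ j, v j ∈ H (e j)) ∧
      LinearMap.range (Fintype.linearCombination (MvP k n) v) = N ∧
      LinQ (HomV e) (r+1) (LinearMap.ker (Fintype.linearCombination (MvP k n) v)) := by
  induction h with
  | zero =>
    refine ⟨0, Fin.elim0, Fin.elim0, fun j => j.elim0, fun j => j.elim0, ?_, ?_⟩
    · rw [eq_bot_iff]
      rintro _ ⟨y, rfl⟩
      simp [Fintype.linearCombination_apply]
    · have : LinearMap.ker (Fintype.linearCombination (MvP k n) (Fin.elim0 : Fin 0 → M)) = ⊥ := by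
        rw [eq_bot_iff]; intro y _; rw [Submodule.mem_bot]; exact Subsingleton.elim _ _
      rw [this]; exact LinQ.zero
  | step N x d U hN hd hx hU hc ih =>
    obtain ⟨m, e, v, he, hv, hr, hK⟩ := ih
    have hlc : ∀ w, Fintype.linearCombination (MvP k n) (Fin.cons x v : Fin (m+1) → M) w =
        w 0 • x + Fintype.linearCombination (MvP k n) v (Fin.tail w) := by
      intro w
      simp [Fintype.linearCombination_apply, Fin.sum_univ_succ, Fin.tail]
    refine ⟨m+1, Fin.cons d e, Fin.cons x v, ?_, ?_, ?_, ?_⟩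
    · intro j; refine Fin.cases ?_ (fun i => ?_) j
      · simpa using hd
      · simpa using he i
    · intro j; refine Fin.cases ?_ (fun i => ?_) j
      · simpa using hx
      · simpa using hv i
    · apply le_antisymm
      · rintro _ ⟨w, rfl⟩
        rw [hlc]
        refine Submodule.add_mem _ (Submodule.mem_sup_right
          (Submodule.smul_mem _ _ (Submodule.mem_span_singleton_self _)))
          (Submodule.mem_sup_left ?_)
        rw [← hr]; exact ⟨_, rfl⟩
      · refine sup_le ?_ ?_
        · rw [← hr]
          rintro _ ⟨w, rfl⟩
          exact ⟨Fin.cons 0 w, by rw [hlc]; simp⟩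
        · rw [Submodule.span_singleton_le_iff_mem]
          refine ⟨Fin.cons 1 0, by rw [hlc]; simp⟩
    · set L := Fintype.linearCombination (MvP k n) (Fin.cons x v : Fin (m+1) → M) with hL
      let KU : Submodule k (MvP k n) → Submodule (MvP k n) (Fin (m+1) → MvP k n) := fun U' =>
        LinearMap.ker L ⊓ Submodule.comap (LinearMap.proj (R := MvP k n) (φ := fun _ : Fin (m+1) => MvP k n) 0) (idl U')
      have memKU : ∀ U' w, w ∈ KU U' ↔ L w = 0 ∧ w 0 ∈ idl U' := fun U' w => Iff.rfl
      -- first coordinates of syzygies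
      have hfst : ∀ w, L w = 0 → w 0 ∈ idl U := by
        intro w hw
        rw [← hc, ← hr]
        rw [hlc] at hw
        refine ⟨-Fin.tail w, ?_⟩
        rw [map_neg, eq_comm]; exact eq_neg_of_add_eq_zero_left hw
      have hlift : ∀ l ∈ U, ∃ s ∈ HomV (k := k) (n := n) (Fin.cons d e : Fin (m+1) → ℕ) (d+1), L s = 0 ∧ s 0 = l := by
        intro l hl
        have h1 : l • x ∈ N := (hc l).2 (Ideal.subset_span hl)
        rw [← hr] at h1
        obtain ⟨c, hcl⟩ := h1
        obtain ⟨p, hp⟩ := hP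
        have h2 := congrArg (p (d+1)) hcl
        rw [hp _ _ _ _ hx, if_pos (by omega), Fintype.linearCombination_apply, map_sum] at h2
        have hl1 : homogeneousComponent (d + 1 - d) l = l := by
          rw [Nat.add_sub_cancel_left]
          exact homogeneousComponent_eq_self (hU hl)
        rw [hl1] at h2
        let c' : Fin m → MvP k n := fun i =>
          if e i ≤ d+1 then homogeneousComponent (d+1 - e i) (c i) else 0
        refine ⟨Fin.cons l (-c'), ?_, ?_, by simp⟩
        · intro α
          refine Fin.cases ?_ (fun i => ?_) α
          · right
            simpa using hU hl
          · by_cases h3 : e i ≤ d+1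
            · right
              refine ⟨by simpa using h3, ?_⟩
              simp only [Fin.cons_succ, Pi.neg_apply, c', if_pos h3]
              exact Submodule.neg_mem _ (homogeneousComponent_mem _ _)
            · left
              simp [c', h3]
        · rw [hlc]
          simp only [Fin.cons_zero, Fin.tail_cons, map_neg]
          rw [← h2, Fintype.linearCombination_apply, ← sub_eq_add_neg, sub_eq_zero]
          exact Finset.sum_congr rfl (fun i _ => hp _ _ _ _ (hv i))
      have hbase : LinQ (HomV (Fin.cons d e : Fin (m+1) → ℕ)) (r+1) (KU ⊥) := by
        have := LinQ.map (H' := HomV (Fin.cons d e : Fin (m+1) → ℕ)) le_rfl (consZ (k := k) (n := n) m)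
          (fun a b hab => Fin.cons_right_injective (α := fun _ => MvP k n) 0 hab) ?_ hK
        · convert this using 1
          ext w
          rw [memKU, idl_bot, Ideal.mem_bot, Submodule.mem_map]
          constructor
          · rintro ⟨h1, h2⟩
            refine ⟨Fin.tail w, ?_, ?_⟩
            · rw [LinearMap.mem_ker]; rw [hlc, h2, zero_smul, zero_add] at h1; exact h1
            · change Fin.cons 0 (Fin.tail w) = w
              rw [← h2]; exact Fin.cons_self_tail w
          · rintro ⟨y, hy, rfl⟩
            refine ⟨?_, rfl⟩
            rw [hlc]
            change (0 : MvP k n) • x + Fintype.linearCombination (MvP k n) v y = 0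
            rw [LinearMap.mem_ker.1 hy]; simp
        · intro d' y hy α
          refine Fin.cases ?_ (fun i => ?_) α
          · left; rfl
          · exact hy i
      have hfin : U.FG := by
        have h1 : (homogeneousSubmodule (Fin (n+1)) k 1).FG := homogeneousSubmodule_fg _ _ _
        have : Module.Finite k (homogeneousSubmodule (Fin (n+1)) k 1) := Module.Finite.iff_fg.2 h1
        have := Submodule.finiteDimensional_of_le hU
        exact Module.Finite.iff_fg.1 this
      obtain ⟨s, hs⟩ := hfin
      have main : ∀ t : Finset (MvP k n), (t : Set (MvP k n)) ⊆ U →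
          LinQ (HomV (Fin.cons d e : Fin (m+1) → ℕ)) (r+1) (KU (Submodule.span k (t : Set (MvP k n)))) := by
        classical
        intro t
        induction t using Finset.induction_on with
        | empty => intro _; simpa using hbase
        | insert l t hlt ih =>
          intro ht
          rw [Finset.coe_insert, Set.insert_subset_iff] at ht
          have ih := ih ht.2
          rw [Finset.coe_insert, Submodule.span_insert, sup_comm]
          have hWU : Submodule.span k (t : Set (MvP k n)) ≤ U := Submodule.span_le.2 ht.2
          generalize Submodule.span k (t : Set (MvP k n)) = W at *
          by_cases hl : l ∈ W
          · rwa [sup_eq_left.2 ((Submodule.span_singleton_le_iff_mem _ _).2 hl)]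
          · obtain ⟨s, hs, hs0, hsl⟩ := hlift l ht.1
            convert LinQ.step (KU W) s (d+1) W ih (by omega) hs (hWU.trans hU) ?_ using 1
            · ext w
              rw [memKU, idl_sup, idl_span {l}, Submodule.mem_sup, Submodule.mem_sup]
              constructor
              · rintro ⟨h1, a, ha, b, hb, hab⟩
                obtain ⟨f, rfl⟩ := Ideal.mem_span_singleton'.1 hb
                have hfs : f • s ∈ Submodule.span (MvP k n) {s} :=
                  Submodule.mem_span_singleton.2 ⟨f, rfl⟩
                refine ⟨w - f • s, ⟨?_, ?_⟩, f • s, hfs, sub_add_cancel w (f • s)⟩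
                · change L _ = 0
                  rw [map_sub, map_smul, h1, hs0]; simp
                · change (w - f • s) 0 ∈ idl W
                  rw [Pi.sub_apply, Pi.smul_apply, hsl, ← hab, smul_eq_mul, add_sub_cancel_right]
                  exact ha
              · rintro ⟨a, ha, b, hb, rfl⟩
                obtain ⟨f, rfl⟩ := Submodule.mem_span_singleton.1 hb
                obtain ⟨h1, h2⟩ := (memKU _ _).1 ha
                refine ⟨by rw [map_add, map_smul, h1, hs0]; simp, a 0, h2, f * l,
                  Ideal.mul_mem_left _ _ (Ideal.mem_span_singleton_self _), by simp [hsl]⟩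
            · intro f
              rw [memKU, map_smul, hs0, smul_zero, Pi.smul_apply, hsl, smul_eq_mul]
              constructor
              · exact fun h => linear_colon W (hWU.trans hU) (hU ht.1) hl h.2
              · exact fun h => ⟨rfl, Ideal.mul_mem_right _ _ h⟩
      have := main s (by rw [← hs]; exact Submodule.subset_span)
      rw [hs] at this
      convert this using 1
      ext w
      rw [memKU, LinearMap.mem_ker]
      exact ⟨fun h => ⟨h, hfst w h⟩, fun h => h.1⟩

theorem fg_of_le {U : Submodule k (MvP k n)}
    (hU : U ≤ homogeneousSubmodule (Fin (n+1)) k 1) : U.FG := by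
  have h1 : (homogeneousSubmodule (Fin (n+1)) k 1).FG := homogeneousSubmodule_fg _ _ _
  have : Module.Finite k (homogeneousSubmodule (Fin (n+1)) k 1) := Module.Finite.iff_fg.2 h1
  have := Submodule.finiteDimensional_of_le hU
  exact Module.Finite.iff_fg.1 this

/-- Induction on spaces of linear forms. -/
theorem lin_induction {V : Submodule k (MvP k n)}
    (hV : V ≤ homogeneousSubmodule (Fin (n+1)) k 1) (P : Submodule k (MvP k n) → Prop)
    (h0 : P ⊥)
    (hs : ∀ W l, W ≤ V → l ∈ V → l ∉ W → P W → P (W ⊔ Submodule.span k {l})) : P V := by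
  classical
  obtain ⟨s, hs'⟩ := fg_of_le hV
  have main : ∀ t : Finset (MvP k n), (t : Set (MvP k n)) ⊆ V →
      P (Submodule.span k (t : Set (MvP k n))) := by
    intro t
    induction t using Finset.induction_on with
    | empty => intro _; simpa using h0
    | insert l t hlt ih =>
      intro ht
      rw [Finset.coe_insert, Set.insert_subset_iff] at ht
      have ih := ih ht.2
      rw [Finset.coe_insert, Submodule.span_insert, sup_comm]
      by_cases hl : l ∈ Submodule.span k (t : Set (MvP k n))
      · rwa [sup_eq_left.2 ((Submodule.span_singleton_le_iff_mem _ _).2 hl)]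
      · exact hs _ _ (Submodule.span_le.2 ht.2) ht.1 hl ih
  have := main s (by rw [← hs']; exact Submodule.subset_span)
  rwa [hs'] at this

/-- Homogeneous polynomials of given degree, as a set. -/
def HS (k : Type*) [Field k] (n : ℕ) (d : ℕ) : Set (MvP k n) :=
  (homogeneousSubmodule (Fin (n+1)) k d : Set (MvP k n))

theorem linQ_linear {V : Submodule k (MvP k n)}
    (hV : V ≤ homogeneousSubmodule (Fin (n+1)) k 1) : LinQ (HS k n) 2 (idl V) := by
  refine lin_induction hV (fun W => LinQ (HS k n) 2 (idl W)) ?_ ?_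
  · rw [idl_bot]; exact LinQ.zero
  · intro W l hW hl hlW ih
    rw [idl_sup, idl_span]
    refine LinQ.step _ l 1 W ih (by omega) (hV hl) (hW.trans hV) ?_
    intro f
    exact ⟨fun h => linear_colon W (hW.trans hV) (hV hl) hlW h,
      fun h => Ideal.mul_mem_right _ _ h⟩

theorem linQ_inter {V W : Submodule k (MvP k n)}
    (hV : V ≤ homogeneousSubmodule (Fin (n+1)) k 1)
    (hW : W ≤ homogeneousSubmodule (Fin (n+1)) k 1) : LinQ (HS k n) 2 (idl V ⊓ idl W) := by
  suffices h : LinQ (HS k n) 2 (idl (V ⊓ W ⊔ V) ⊓ idl W) by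
    rwa [sup_eq_right.2 inf_le_left] at h
  refine lin_induction hV (fun Y => LinQ (HS k n) 2 (idl (V ⊓ W ⊔ Y) ⊓ idl W)) ?_ ?_
  · rw [sup_bot_eq, inf_eq_left.2 (idl_mono inf_le_right)]
    exact linQ_linear (inf_le_left.trans hV)
  · intro Y y hY hy hyY ih
    rw [← sup_assoc]
    have hBV : V ⊓ W ⊔ Y ≤ V := sup_le inf_le_left hY
    have hVW : V ⊓ W ≤ V ⊓ W ⊔ Y := le_sup_left
    generalize V ⊓ W ⊔ Y = B at *
    by_cases hyB : y ∈ B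
    · rwa [sup_eq_left.2 ((Submodule.span_singleton_le_iff_mem _ _).2 hyB)]
    have hB1 := hBV.trans hV
    have hyBW : y ∉ B ⊔ W := by
      intro h
      obtain ⟨b, hb, w, hw, rfl⟩ := Submodule.mem_sup.1 h
      apply hyB
      have : w ∈ V := by simpa using V.sub_mem hy (hBV hb)
      exact B.add_mem hb (hVW ⟨this, hw⟩)
    have key : LinQ (HS k n) 2 (idl B ⊓ idl W ⊔ Ideal.span {y} * idl W) := by
      refine lin_induction hW
        (fun Z => LinQ (HS k n) 2 (idl B ⊓ idl W ⊔ Ideal.span {y} * idl Z)) ?_ ?_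
      · rw [idl_bot, Ideal.mul_bot, sup_bot_eq]; exact ih
      · intro Z z hZ hz hzZ ih2
        rw [idl_sup, idl_span, Ideal.mul_sup, Ideal.span_singleton_mul_span_singleton, ← sup_assoc]
        by_cases hzB : z ∈ B ⊔ Z
        · have : y * z ∈ idl B ⊓ idl W ⊔ Ideal.span {y} * idl Z := by
            obtain ⟨b, hb, u, hu, rfl⟩ := Submodule.mem_sup.1 hzB
            rw [mul_add]
            have hbW : b ∈ W := by simpa using W.sub_mem hz (hZ hu)
            refine Ideal.add_mem _ (Ideal.mem_sup_left ⟨?_, ?_⟩) (Ideal.mem_sup_right ?_)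
            · exact Ideal.mul_mem_left _ _ (Ideal.subset_span hb)
            · exact Ideal.mul_mem_left _ _ (Ideal.subset_span hbW)
            · exact Ideal.mul_mem_mul (Ideal.mem_span_singleton_self _) (Ideal.subset_span hu)
          rwa [sup_eq_left.2 ((Ideal.span_singleton_le_iff_mem _).2 this)]
        · refine LinQ.step _ (y * z) 2 (B ⊔ Z) ih2 le_rfl ?_ (sup_le hB1 (hZ.trans hW)) ?_
          · exact IsHomogeneous.mul (hV hy) (hW hz)
          · intro f
            rw [smul_eq_mul]
            constructor
            · intro h
              refine linear_colon _ (sup_le hB1 (hZ.trans hW)) (hW hz) hzB ?_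
              obtain ⟨a, ha, c, hc, hac⟩ := Submodule.mem_sup.1 h
              obtain ⟨b, hb, rfl⟩ := Ideal.mem_span_singleton_mul.1 hc
              have h1 : (f * z - b) * y ∈ idl B := by
                have : (f * z - b) * y = a := by linear_combination -hac
                rw [this]; exact ha.1
              have h2 := linear_colon B hB1 (hV hy) hyB h1
              rw [idl_sup]
              have := Ideal.add_mem _ (Ideal.mem_sup_left (T := idl Z) h2) (Ideal.mem_sup_right hb)
              simpa using this
            · intro h
              have h1 : f * z ∈ idl (B ⊔ Z) := Ideal.mul_mem_right _ _ h
              rw [idl_sup] at h1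
              obtain ⟨a, ha, b, hb, hab⟩ := Submodule.mem_sup.1 h1
              have haW : a ∈ idl W := by
                have : a = f * z - b := by linear_combination hab
                rw [this]
                exact Ideal.sub_mem _ (Ideal.mul_mem_left _ _ (Ideal.subset_span hz))
                  (idl_mono hZ hb)
              have : f * (y * z) = y * a + y * b := by linear_combination -y * hab
              rw [this]
              exact Ideal.add_mem _
                (Ideal.mem_sup_left ⟨Ideal.mul_mem_left _ _ ha, Ideal.mul_mem_left _ _ haW⟩)
                (Ideal.mem_sup_right (Ideal.mul_mem_mul (Ideal.mem_span_singleton_self _) hb))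
    convert key using 1
    apply le_antisymm
    · rintro f ⟨hf1, hf2⟩
      rw [SetLike.mem_coe, idl_sup, idl_span] at hf1
      obtain ⟨a, ha, c, hc, rfl⟩ := Submodule.mem_sup.1 hf1
      obtain ⟨g, rfl⟩ := Ideal.mem_span_singleton'.1 hc
      have h1 : g * y ∈ idl (B ⊔ W) := by
        rw [idl_sup]
        have := Ideal.sub_mem _ (Ideal.mem_sup_right (S := idl B) hf2) (Ideal.mem_sup_left ha)
        simpa using this
      have h2 := linear_colon _ (sup_le hB1 hW) (hV hy) hyBW h1
      rw [idl_sup] at h2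
      obtain ⟨b, hb, c, hcW, rfl⟩ := Submodule.mem_sup.1 h2
      have : a + (b + c) * y = (a + b * y) + y * c := by ring
      rw [this]
      refine Ideal.add_mem _ (Ideal.mem_sup_left ⟨?_, ?_⟩)
        (Ideal.mem_sup_right (Ideal.mul_mem_mul (Ideal.mem_span_singleton_self _) hcW))
      · exact Ideal.add_mem _ ha (Ideal.mul_mem_right _ _ hb)
      · have h3 : a + b * y = (a + (b + c) * y) - c * y := by ring
        rw [h3]
        exact Ideal.sub_mem _ hf2 (Ideal.mul_mem_right _ _ hcW)
    · refine sup_le (inf_le_inf_right _ (idl_mono le_sup_left)) (le_inf ?_ Ideal.mul_le_right)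
      refine Ideal.mul_le_left.trans ?_
      rw [idl_sup, idl_span]; exact le_sup_right

/-- A stage in the construction of the resolution. -/
structure Stage (k : Type*) [Field k] (n : ℕ) (i : ℕ) where
  /-- rank -/
  ρ : ℕ
  /-- degrees -/
  e : Fin ρ → ℕ
  /-- next syzygy module -/
  K : Submodule (MvP k n) (Fin ρ → MvP k n)
  bd : ∀ β, e β ≤ 2 + i
  lq : LinQ (HomV e) (2 + i + 1) K

theorem Stage.exists_next {i : ℕ} (s : Stage k n i) :
    ∃ (s' : Stage k n (i+1)) (δ : (Fin s'.ρ → MvP k n) →ₗ[MvP k n] (Fin s.ρ → MvP k n)),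
      LinearMap.range δ = s.K ∧ LinearMap.ker δ = s'.K ∧
      ∀ β, δ (Pi.single β 1) ∈ HomV s.e (s'.e β) := by
  obtain ⟨m, e, v, he, hv, hr, hK⟩ := syzygy _ (hasP_homV s.e) _ _ s.lq
  refine ⟨⟨m, e, _, he, hK⟩, Fintype.linearCombination (MvP k n) v, hr, rfl, ?_⟩
  intro β
  rw [Fintype.linearCombination_apply_single, one_smul]
  exact hv β

theorem regular_of_linQ (I : Ideal (MvP k n)) (h : LinQ (HS k n) 2 I) : IdealIsRegular I 2 := by
  obtain ⟨m, e, v, he, hv, hr, hK⟩ := syzygy _ hasP_ring _ _ h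
  choose next δ h1 h2 h3 using fun i => Stage.exists_next (k := k) (n := n) (i := i)
  let s0 : Stage k n 0 := ⟨m, e, _, he, hK⟩
  let st : ∀ i, Stage k n i := fun i => Nat.rec s0 (fun i s => next i s) i
  refine ⟨fun i => (st i).ρ, fun i => (st i).e, fun i => δ i (st i),
    Fintype.linearCombination (MvP k n) v, hr, (h1 0 s0).symm, ?_, ?_, ?_, ?_⟩
  · intro i
    exact (h2 i (st i)).trans (h1 (i+1) (st (i+1))).symm
  · intro β
    have : Fintype.linearCombination (MvP k n) v (Pi.single β 1) = v β := by
      rw [Fintype.linearCombination_apply_single, one_smul]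
    exact this ▸ hv β
  · intro i β α
    exact h3 i (st i) β α
  · intro i β
    exact_mod_cast (st i).bd β

end Helpers
/-- The intersection of two linear ideals is `2`-regular. -/
theorem inter_two_linear_ideals_two_regular {k : Type*} [Field k] {n : ℕ}
    (I₁ I₂ : Ideal (MvP k n)) (h₁ : IsLinearIdeal I₁) (h₂ : IsLinearIdeal I₂) :
    IdealIsRegular (I₁ ⊓ I₂) 2 := by
  obtain ⟨T₁, hT₁, rfl⟩ := h₁
  obtain ⟨T₂, hT₂, rfl⟩ := h₂
  rw [← idl_span T₁, ← idl_span T₂]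
  exact regular_of_linQ _ (linQ_inter (Submodule.span_le.2 hT₁) (Submodule.span_le.2 hT₂))
end
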